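/- arXiv:2305.00728 — 3 statements merged into one kernel-verified Lean document; each statement's English description precedes it below -/
import Mathlib

section
/- Simplicity of the principal eigenvalue: let 0 < γ < 2. Every function u that is C² on (0,1), positive on (0,1), continuous on (0,1] with u(1) = 0, and satisfies F(D(u''(r), u'(r)/r)) + λ̄'_γ(F)·u(r)·r^{−γ} = 0 for all r ∈ (0,1), is bounded on (0,1); and any two such functions u, v are proportional, i.e. there exists t > 0 with u = t·v on (0,1). -/
open Set Real Filter MeasureTheory Matrix

noncomputable section

/-- The `N × N` diagonal matrix with first diagonal entry `a` and the remaining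
`N - 1` diagonal entries equal to `b`. -/
def Dmat (N : ℕ) (a b : ℝ) : Matrix (Fin N) (Fin N) ℝ :=
  Matrix.diagonal (fun i => if (i : ℕ) = 0 then a else b)

/-- Uniform ellipticity with constants `0 < lam ≤ Lam`. -/
def UnifElliptic (N : ℕ) (lam Lam : ℝ) (F : Matrix (Fin N) (Fin N) ℝ → ℝ) : Prop :=
  ∀ M P : Matrix (Fin N) (Fin N) ℝ, M.IsSymm → P.PosSemidef →
    lam * P.trace ≤ F (M + P) - F M ∧ F (M + P) - F M ≤ Lam * P.trace

/-- Rotation invariance. -/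
def RotInvariant (N : ℕ) (F : Matrix (Fin N) (Fin N) ℝ → ℝ) : Prop :=
  ∀ O M : Matrix (Fin N) (Fin N) ℝ, Oᵀ * O = 1 → F (Oᵀ * M * O) = F M

/-- Positive one-homogeneity. -/
def PosHomog (N : ℕ) (F : Matrix (Fin N) (Fin N) ℝ → ℝ) : Prop :=
  ∀ t : ℝ, 0 < t → ∀ M : Matrix (Fin N) (Fin N) ℝ, F (t • M) = t * F M

/-- The radial principal eigenvalue `λ̄'_γ(F)` on the punctured unit ball. -/
def radialEV (N : ℕ) (F : Matrix (Fin N) (Fin N) ℝ → ℝ) (γ : ℝ) : ℝ :=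
  sSup {μ : ℝ | ∃ u : ℝ → ℝ, ContDiffOn ℝ 2 u (Ioo 0 1) ∧
    (∀ r ∈ Ioo (0:ℝ) 1, 0 < u r) ∧
    (∀ r ∈ Ioo (0:ℝ) 1,
      F (Dmat N (deriv (deriv u) r) (deriv u r / r)) + μ * u r * r ^ (-γ) ≤ 0)}

/-- Abstract properties of the radial operator `f a b = F (Dmat N a b)`. -/
structure GoodOp (f : ℝ → ℝ → ℝ) (lam Lam n : ℝ) : Prop where
  lam_pos : 0 < lam
  le : lam ≤ Lam
  n_pos : 1 ≤ n
  gap : 0 < lam * n - Lam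
  fst : ∀ a a' b, a ≤ a' → lam * (a' - a) ≤ f a' b - f a b ∧ f a' b - f a b ≤ Lam * (a' - a)
  snd : ∀ a b b', b ≤ b' →
    lam * n * (b' - b) ≤ f a b' - f a b ∧ f a b' - f a b ≤ Lam * n * (b' - b)
  hom : ∀ t a b, 0 < t → f (t * a) (t * b) = t * f a b

theorem goodOp_of (N : ℕ) (hN : 2 ≤ N) (lam Lam : ℝ) (hlam : 0 < lam) (hlL : lam ≤ Lam)
    (hNp : 2 < lam / Lam * ((N : ℝ) - 1) + 1)
    (F : Matrix (Fin N) (Fin N) ℝ → ℝ)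
    (hF1 : UnifElliptic N lam Lam F) (hF3 : PosHomog N F) :
    GoodOp (fun a b => F (Dmat N a b)) lam Lam ((N : ℝ) - 1) := by
  have hN' : (2 : ℝ) ≤ N := by exact_mod_cast hN
  have hLam : 0 < Lam := lt_of_lt_of_le hlam hlL
  have key : ∀ a b p q : ℝ, 0 ≤ p → 0 ≤ q →
      lam * (p + ((N : ℝ) - 1) * q) ≤ F (Dmat N (a + p) (b + q)) - F (Dmat N a b) ∧
      F (Dmat N (a + p) (b + q)) - F (Dmat N a b) ≤ Lam * (p + ((N : ℝ) - 1) * q) := by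
    intro a b p q hp hq
    have hsym : (Dmat N a b).IsSymm := by
      simp [Dmat, Matrix.IsSymm]
    have hpos : (Dmat N p q).PosSemidef := by
      unfold Dmat
      apply Matrix.PosSemidef.diagonal
      intro i
      simp only [Pi.zero_apply]
      split_ifs <;> assumption
    have htr : (Dmat N p q).trace = p + ((N : ℝ) - 1) * q := by
      obtain ⟨k, rfl⟩ : ∃ k, N = k + 1 := ⟨N - 1, by omega⟩
      simp [Dmat, Matrix.trace, Fin.sum_univ_succ]
    have hadd : Dmat N a b + Dmat N p q = Dmat N (a + p) (b + q) := by
      unfold Dmat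
      rw [Matrix.diagonal_add]
      congr 1
      funext i
      split_ifs <;> rfl
    have := hF1 _ _ hsym hpos
    rwa [htr, hadd] at this
  refine ⟨hlam, hlL, by linarith, ?_, ?_, ?_, ?_⟩
  · have h1 : 1 < lam / Lam * ((N : ℝ) - 1) := by linarith
    have : Lam * 1 < Lam * (lam / Lam * ((N : ℝ) - 1)) := by gcongr
    have e : Lam * (lam / Lam * ((N : ℝ) - 1)) = lam * ((N : ℝ) - 1) := by field_simp
    linarith
  · intro a a' b h
    have := key a b (a' - a) 0 (by linarith) le_rfl
    simpa using this
  · intro a b b' h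
    have := key a b 0 (b' - b) le_rfl (by linarith)
    simpa [mul_assoc] using this
  · intro t a b ht
    have := hF3 t ht (Dmat N a b)
    rw [← this]
    congr 1
    unfold Dmat
    rw [← Matrix.diagonal_smul]
    congr 1
    funext i
    simp only [Pi.smul_apply, smul_eq_mul]
    split_ifs <;> rfl

namespace GoodOp

variable {f : ℝ → ℝ → ℝ} {lam Lam n : ℝ}

theorem zero (h : GoodOp f lam Lam n) : f 0 0 = 0 := by
  have := h.hom 2 0 0 (by norm_num)
  simp at this
  linarith

theorem fst_eq_bound (h : GoodOp f lam Lam n) {a a' b b' : ℝ} (he : f a b = f a' b') :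
    lam * |a - a'| ≤ Lam * n * |b - b'| := by
  have h1 : lam * |a - a'| ≤ |f a b - f a' b| := by
    rcases le_total a a' with hh | hh
    · have := (h.fst a a' b hh).1
      rw [abs_sub_comm a a', abs_sub_comm (f a b), abs_of_nonneg (by linarith : 0 ≤ a' - a)]
      exact this.trans (le_abs_self _)
    · have := (h.fst a' a b hh).1
      rw [abs_of_nonneg (by linarith : 0 ≤ a - a')]
      exact this.trans (le_abs_self _)
  have hn : 0 < lam * n := mul_pos h.lam_pos (by linarith [h.n_pos])
  have h2 : |f a' b' - f a' b| ≤ Lam * n * |b - b'| := by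
    rcases le_total b b' with hh | hh
    · have := h.snd a' b b' hh
      rw [abs_sub_comm b b', abs_of_nonneg (by linarith : 0 ≤ b' - b), abs_of_nonneg]
      · exact this.2
      · have := mul_nonneg hn.le (by linarith : 0 ≤ b' - b)
        linarith
    · have := h.snd a' b' b hh
      rw [abs_sub_comm, abs_of_nonneg (by linarith : 0 ≤ b - b'), abs_of_nonneg]
      · exact this.2
      · have := mul_nonneg hn.le (by linarith : 0 ≤ b - b')
        linarith
  rw [he] at h1
  linarith

/-- Bound on the first slot. -/
theorem fst_bound (h : GoodOp f lam Lam n) (a b : ℝ) :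
    lam * |a| ≤ |f a b| + Lam * n * |b| := by
  have hn : 0 < lam * n := mul_pos h.lam_pos (by linarith [h.n_pos])
  have h1 : lam * |a| ≤ |f a b - f 0 b| := by
    rcases le_total a 0 with hh | hh
    · have := (h.fst a 0 b hh).1
      rw [abs_of_nonpos hh, abs_sub_comm]
      exact (by linarith : lam * -a ≤ f 0 b - f a b).trans (le_abs_self _)
    · have := (h.fst 0 a b hh).1
      rw [abs_of_nonneg hh]
      exact (by linarith : lam * a ≤ f a b - f 0 b).trans (le_abs_self _)
  have h2 : |f 0 b| ≤ Lam * n * |b| := by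
    have h0 := h.zero
    rcases le_total b 0 with hh | hh
    · have := h.snd 0 b 0 hh
      have h3 := mul_nonneg hn.le (by linarith : 0 ≤ 0 - b)
      rw [abs_of_nonpos hh, abs_le]
      constructor <;> linarith
    · have := h.snd 0 0 b hh
      have h3 := mul_nonneg hn.le (by linarith : 0 ≤ b - 0)
      rw [abs_of_nonneg hh, abs_le]
      constructor <;> linarith
  have := abs_sub (f a b) (f 0 b)
  linarith

/-- An upper bound for the first slot for negative values of `f`. -/
theorem fst_le (h : GoodOp f lam Lam n) {a b Y : ℝ} (hY : 0 ≤ Y) (hf : f a b ≤ -Y) :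
    a ≤ Lam * n / lam * |b| - Y / Lam := by
  have hLam : 0 < Lam := lt_of_lt_of_le h.lam_pos h.le
  have hlam := h.lam_pos
  have hn : 0 < n := by linarith [h.n_pos]
  have hb0 : -(Lam * n * |b|) ≤ f 0 b := by
    have h0 := h.zero
    rcases le_total b 0 with hh | hh
    · have := h.snd 0 b 0 hh
      rw [abs_of_nonpos hh]
      linarith
    · have := h.snd 0 0 b hh
      have h3 : 0 ≤ lam * n * (b - 0) := by
        have : 0 ≤ b - 0 := by linarith
        positivity
      have h4 : 0 ≤ Lam * n * |b| := by positivity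
      linarith
  have hX : 0 ≤ Lam * n * |b| := by positivity
  set X := Lam * n * |b| with hXd
  have e : Lam * n / lam * |b| = X / lam := by rw [hXd]; ring
  rw [e]
  have hXl : X / Lam ≤ X / lam := div_le_div_of_nonneg_left hX hlam h.le
  have hYl : Y / Lam ≤ Y / lam := div_le_div_of_nonneg_left hY hlam h.le
  rcases le_total a 0 with hh | hh
  · have := (h.fst a 0 b hh).2
    have h5 : a ≤ (X - Y) / Lam := by
      rw [le_div_iff₀ hLam]; linarith
    rw [sub_div] at h5
    linarith
  · have := (h.fst 0 a b hh).1
    have h5 : a ≤ (X - Y) / lam := by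
      rw [le_div_iff₀ hlam]; linarith
    rw [sub_div] at h5
    linarith

end GoodOp

/-- Pointwise derivative facts for a `C²` function on `(0,1)`. -/
theorem c2_facts {u : ℝ → ℝ} (hu : ContDiffOn ℝ 2 u (Ioo 0 1)) :
    (∀ r ∈ Ioo (0:ℝ) 1, HasDerivAt u (deriv u r) r) ∧
    (∀ r ∈ Ioo (0:ℝ) 1, HasDerivAt (deriv u) (deriv (deriv u) r) r) ∧
    ContinuousOn (deriv (deriv u)) (Ioo 0 1) := by
  have h1 : ContDiffOn ℝ 1 (deriv u) (Ioo 0 1) := by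
    have := (contDiffOn_succ_iff_deriv_of_isOpen (n := 1) isOpen_Ioo).1 (by simpa [one_add_one_eq_two] using hu)
    exact this.2.2
  refine ⟨fun r hr => ?_, fun r hr => ?_, ?_⟩
  · exact ((hu.differentiableOn (by norm_num)).differentiableAt (isOpen_Ioo.mem_nhds hr)).hasDerivAt
  · exact ((h1.differentiableOn (by norm_num)).differentiableAt (isOpen_Ioo.mem_nhds hr)).hasDerivAt
  · exact h1.continuousOn_deriv_of_isOpen isOpen_Ioo (by norm_num)

/-- The logarithmic derivative turns the equation into a first order one. -/
theorem log_deriv_facts {u : ℝ → ℝ} (hu : ContDiffOn ℝ 2 u (Ioo 0 1))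
    (hpos : ∀ r ∈ Ioo (0:ℝ) 1, 0 < u r) :
    ∃ p p' : ℝ → ℝ, (∀ r ∈ Ioo (0:ℝ) 1, HasDerivAt p (p' r) r) ∧
      ContinuousOn p' (Ioo 0 1) ∧
      (∀ r ∈ Ioo (0:ℝ) 1, deriv u r = -(p r * u r / r)) ∧
      (∀ r ∈ Ioo (0:ℝ) 1, deriv (deriv u) r
        = u r / r ^ 2 * (-(r * p' r) + p r + p r ^ 2)) := by
  obtain ⟨h1, h2, h3⟩ := c2_facts hu
  have c0 : ContinuousOn u (Ioo 0 1) := fun r hr => (h1 r hr).continuousAt.continuousWithinAt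
  have c1 : ContinuousOn (deriv u) (Ioo 0 1) :=
    fun r hr => (h2 r hr).continuousAt.continuousWithinAt
  refine ⟨fun r => -(r * deriv u r) / u r,
    fun r => ((-(1 * deriv u r + r * deriv (deriv u) r)) * u r
      - (-(r * deriv u r)) * deriv u r) / u r ^ 2, ?_, ?_, ?_, ?_⟩
  · intro r hr
    exact (((hasDerivAt_id r).mul (h2 r hr)).neg).div (h1 r hr) (hpos r hr).ne'
  · apply ContinuousOn.div
    · fun_prop
    · fun_prop
    · intro r hr
      exact pow_ne_zero _ (hpos r hr).ne'
  · intro r hr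
    have := (hpos r hr).ne'
    have hr0 := hr.1.ne'
    field_simp
  · intro r hr
    have := (hpos r hr).ne'
    have hr0 := hr.1.ne'
    field_simp
    ring

theorem rpow_two_sub {r γ : ℝ} (hr : 0 < r) : r ^ (2 - γ) = r ^ 2 * r ^ (-γ) := by
  rw [sub_eq_add_neg, Real.rpow_add hr]
  norm_num

theorem GoodOp.log_eq {f : ℝ → ℝ → ℝ} {lam Lam n : ℝ} (h : GoodOp f lam Lam n)
    {r U P Q μ γ : ℝ} (hr : 0 < r) (hU : 0 < U) :
    f (U / r ^ 2 * Q) (-(P * U / r) / r) + μ * U * r ^ (-γ)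
      = U / r ^ 2 * (f Q (-P) + μ * r ^ (2 - γ)) := by
  have e : -(P * U / r) / r = U / r ^ 2 * (-P) := by field_simp
  rw [e, h.hom _ _ _ (by positivity), rpow_two_sub hr]
  field_simp

/-- From a first order supersolution to a second order one. -/
theorem GoodOp.build {f : ℝ → ℝ → ℝ} {lam Lam n : ℝ} (h : GoodOp f lam Lam n) {μ γ : ℝ}
    {p p' : ℝ → ℝ} (hp : ∀ r ∈ Ioo (0:ℝ) 1, HasDerivAt p (p' r) r)
    (hc : ContinuousOn p' (Ioo 0 1))
    (hs : ∀ r ∈ Ioo (0:ℝ) 1, f (-(r * p' r) + p r + p r ^ 2) (-p r) ≤ -(μ * r ^ (2 - γ))) :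
    ∃ u : ℝ → ℝ, ContDiffOn ℝ 2 u (Ioo 0 1) ∧ (∀ r ∈ Ioo (0:ℝ) 1, 0 < u r) ∧
    (∀ r ∈ Ioo (0:ℝ) 1,
      f (deriv (deriv u) r) (deriv u r / r) + μ * u r * r ^ (-γ) ≤ 0) := by
  have cp : ContinuousOn p (Ioo 0 1) := fun r hr => (hp r hr).continuousAt.continuousWithinAt
  have cg : ContinuousOn (fun s => -(p s / s)) (Ioo 0 1) :=
    (cp.div continuousOn_id (fun r hr => hr.1.ne')).neg
  let w : ℝ → ℝ := fun r => ∫ s in (1/2:ℝ)..r, -(p s / s)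
  have hw : ∀ r ∈ Ioo (0:ℝ) 1, HasDerivAt w (-(p r / r)) r := by
    intro r hr
    apply intervalIntegral.integral_hasDerivAt_right
    · apply ContinuousOn.intervalIntegrable
      apply cg.mono
      intro x hx
      rw [Set.mem_uIcc] at hx
      rcases hx with hx | hx
      · exact ⟨by linarith [hx.1], by linarith [hx.2, hr.2]⟩
      · exact ⟨by linarith [hx.1, hr.1], by linarith [hx.2]⟩
    · exact cg.stronglyMeasurableAtFilter isOpen_Ioo r hr
    · exact cg.continuousAt (isOpen_Ioo.mem_nhds hr)
  let u : ℝ → ℝ := fun r => Real.exp (w r)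
  have upos : ∀ r, 0 < u r := fun r => Real.exp_pos _
  have hu1 : ∀ r ∈ Ioo (0:ℝ) 1, HasDerivAt u (-(p r * u r / r)) r := by
    intro r hr
    refine (hw r hr).exp.congr_deriv ?_
    change Real.exp (w r) * _ = -(p r * Real.exp (w r) / r)
    ring
  have hu1' : ∀ r ∈ Ioo (0:ℝ) 1, deriv u r = -(p r * u r / r) := fun r hr => (hu1 r hr).deriv
  have hu2 : ∀ r ∈ Ioo (0:ℝ) 1,
      HasDerivAt (deriv u) (u r / r ^ 2 * (-(r * p' r) + p r + p r ^ 2)) r := by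
    intro r hr
    have hd := ((((hp r hr).mul (hu1 r hr)).div (hasDerivAt_id r) hr.1.ne').neg)
    have he : deriv u =ᶠ[nhds r] (fun r => -(p r * u r / r)) := by
      filter_upwards [isOpen_Ioo.mem_nhds hr] with x hx using hu1' x hx
    refine HasDerivAt.congr_of_eventuallyEq ?_ he
    refine hd.congr_deriv ?_
    have := hr.1.ne'
    simp only [id, Pi.mul_apply]
    field_simp
    ring
  have hu2' := fun r hr => (hu2 r hr).deriv
  have cu : ContinuousOn u (Ioo 0 1) := fun r hr => (hu1 r hr).continuousAt.continuousWithinAt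
  refine ⟨u, ?_, fun r _ => upos r, ?_⟩
  · have h1 : ContDiffOn ℝ 1 (deriv u) (Ioo 0 1) := by
      rw [← zero_add (1 : WithTop ℕ∞), contDiffOn_succ_iff_deriv_of_isOpen isOpen_Ioo]
      refine ⟨fun r hr => (hu2 r hr).differentiableAt.differentiableWithinAt, by simp, ?_⟩
      rw [contDiffOn_zero]
      refine ContinuousOn.congr (f := fun r => u r / r ^ 2 * (-(r * p' r) + p r + p r ^ 2)) ?_ hu2'
      apply ContinuousOn.mul
      · exact cu.div (by fun_prop) (fun r hr => pow_ne_zero _ hr.1.ne')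
      · fun_prop
    rw [← one_add_one_eq_two, contDiffOn_succ_iff_deriv_of_isOpen isOpen_Ioo]
    exact ⟨fun r hr => (hu1 r hr).differentiableAt.differentiableWithinAt, by simp, h1⟩
  · intro r hr
    rw [hu2' r hr, hu1' r hr, h.log_eq hr.1 (upos r)]
    have := hs r hr
    have hr0 := hr.1
    have hU := upos r
    apply mul_nonpos_of_nonneg_of_nonpos
    · positivity
    · linarith

theorem mono_aux {g g' : ℝ → ℝ} (hg : ∀ r ∈ Ioo (0:ℝ) 1, HasDerivAt g (g' r) r) {a b : ℝ}
    (ha : 0 < a) (hab : a ≤ b) (hb : b < 1) (h0 : ∀ r ∈ Icc a b, 0 ≤ g' r) : g a ≤ g b := by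
  have hsub : ∀ r ∈ Icc a b, r ∈ Ioo (0:ℝ) 1 :=
    fun r hr => ⟨by linarith [hr.1], by linarith [hr.2]⟩
  have hm : MonotoneOn g (Icc a b) := by
    apply monotoneOn_of_hasDerivWithinAt_nonneg (f' := g') (convex_Icc a b)
    · exact fun r hr => (hg r (hsub r hr)).continuousAt.continuousWithinAt
    · intro r hr
      exact (hg r (hsub r (interior_subset hr))).hasDerivWithinAt
    · intro r hr
      exact h0 r (interior_subset hr)
  exact hm (left_mem_Icc.2 hab) (right_mem_Icc.2 hab) hab

theorem barrier_fwd {p p' : ℝ → ℝ} {a b m : ℝ}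
    (hp : ∀ r ∈ Icc a b, HasDerivAt p (p' r) r)
    (hab : a ≤ b) (hm : m ≤ p a)
    (h : ∀ r ∈ Icc a b, p r = m → 0 < p' r) : m ≤ p b := by
  refine image_le_of_deriv_right_lt_deriv_boundary' (f := fun _ => m) (f' := fun _ => 0)
    (B := p) (B' := p') (a := a) (b := b) continuousOn_const
    (fun x _ => hasDerivWithinAt_const _ _ _) hm
    (fun r hr => (hp r hr).continuousAt.continuousWithinAt)
    (fun r hr => (hp r (Ico_subset_Icc_self hr)).hasDerivWithinAt)
    (fun r hr he => h r (Ico_subset_Icc_self hr) he.symm) (right_mem_Icc.2 hab)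

theorem barrier_bwd {p p' : ℝ → ℝ} {a b m : ℝ}
    (hp : ∀ r ∈ Icc a b, HasDerivAt p (p' r) r)
    (hab : a ≤ b) (hm : m ≤ p b)
    (h : ∀ r ∈ Icc a b, p r = m → p' r < 0) : m ≤ p a := by
  have := barrier_fwd (p := fun x => p (-x)) (p' := fun x => -(p' (-x))) (a := -b) (b := -a)
    (m := m) ?_ (by linarith) (by simpa using hm) ?_
  · simpa using this
  · intro r hr
    have h1 := hp (-r) ⟨by linarith [hr.2], by linarith [hr.1]⟩
    have := h1.comp r (hasDerivAt_neg r)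
    simpa [Function.comp_def] using this
  · intro r hr he
    have := h (-r) ⟨by linarith [hr.2], by linarith [hr.1]⟩ he
    linarith

/-- The admissible set. -/
def evSet (f : ℝ → ℝ → ℝ) (γ : ℝ) : Set ℝ :=
  {μ : ℝ | ∃ u : ℝ → ℝ, ContDiffOn ℝ 2 u (Ioo 0 1) ∧
    (∀ r ∈ Ioo (0:ℝ) 1, 0 < u r) ∧
    (∀ r ∈ Ioo (0:ℝ) 1, f (deriv (deriv u) r) (deriv u r / r) + μ * u r * r ^ (-γ) ≤ 0)}

namespace GoodOp

variable {f : ℝ → ℝ → ℝ} {lam Lam n : ℝ}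

theorem Lam_pos (h : GoodOp f lam Lam n) : 0 < Lam := lt_of_lt_of_le h.lam_pos h.le

theorem small_m (h : GoodOp f lam Lam n) {m : ℝ} (hm : 0 < m)
    (hm2 : Lam * m ≤ (lam * n - Lam) / 2) :
    f (m + m ^ 2) (-m) ≤ -(m * ((lam * n - Lam) / 2)) := by
  have e : f (m + m ^ 2) (-m) = m * f (1 + m) (-1) := by
    rw [← h.hom m _ _ hm]; congr 1 <;> ring
  rw [e]
  have h1 := (h.fst 0 (1 + m) (-1) (by linarith)).2
  have h2 := (h.snd 0 (-1) 0 (by norm_num)).1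
  have h0 := h.zero
  have : f (1 + m) (-1) ≤ -((lam * n - Lam) / 2) := by linarith
  have := mul_le_mul_of_nonneg_left this hm.le
  linarith

theorem bdd (h : GoodOp f lam Lam n) {γ : ℝ} (hγ0 : 0 < γ) (hγ2 : γ < 2) :
    BddAbove (evSet f γ) := by
  have hL := h.Lam_pos
  set C := Lam * n / lam with hC
  refine ⟨16 * Lam * ((C + 1) ^ 2 / 2 + 128), ?_⟩
  rintro μ ⟨u, hu, hpos, hs⟩
  by_contra hlt
  push Not at hlt
  have hμ : 0 < μ := lt_trans (by positivity) hlt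
  obtain ⟨p, p', hp, hc, h1, h2⟩ := log_deriv_facts hu hpos
  have key : ∀ r ∈ Icc (1/4:ℝ) (3/4), (p r ^ 2 + 256) / 2 ≤ p' r := by
    intro r hr
    have hr' : r ∈ Ioo (0:ℝ) 1 := ⟨by linarith [hr.1], by linarith [hr.2]⟩
    have hsr := hs r hr'
    have hr0 := hr'.1
    have hU := hpos r hr'
    rw [h2 r hr', h1 r hr', h.log_eq hr'.1 hU] at hsr
    have hUr : 0 < u r / r ^ 2 := by positivity
    have h3 : f (-(r * p' r) + p r + p r ^ 2) (-p r) ≤ -(μ * r ^ (2 - γ)) := by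
      by_contra hh
      push Not at hh
      have : 0 < u r / r ^ 2 * (f (-(r * p' r) + p r + p r ^ 2) (-p r) + μ * r ^ (2 - γ)) :=
        mul_pos hUr (by linarith)
      linarith
    have h4 := h.fst_le (by positivity) h3
    rw [abs_neg, ← hC] at h4
    have h5 : (1/16:ℝ) ≤ r ^ (2 - γ) := by
      calc (1/16:ℝ) = (1/4:ℝ) ^ (2:ℝ) := by norm_num
        _ ≤ (1/4:ℝ) ^ (2 - γ) :=
          Real.rpow_le_rpow_of_exponent_ge (by norm_num) (by norm_num) (by linarith)
        _ ≤ r ^ (2 - γ) := Real.rpow_le_rpow (by norm_num) hr.1 (by linarith)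
    have h6 : (C + 1) ^ 2 / 2 + 128 ≤ μ * r ^ (2 - γ) / Lam := by
      rw [le_div_iff₀ hL]
      have : μ * (1/16) ≤ μ * r ^ (2 - γ) := by gcongr
      linarith
    have h7 : (p r ^ 2 + 256) / 2 ≤ r * p' r := by
      have := sq_abs (p r)
      have := neg_abs_le (p r)
      nlinarith [sq_nonneg (|p r| - (C + 1))]
    have h8 : 0 < p' r := by
      by_contra hh
      push Not at hh
      have : r * p' r ≤ 0 := mul_nonpos_of_nonneg_of_nonpos hr0.le hh
      nlinarith [sq_nonneg (p r)]
    have : r * p' r ≤ 1 * p' r := by gcongr; exact hr'.2.le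
    linarith
  have hm := mono_aux (g := fun r => Real.arctan (p r / 16) - 8 * r)
    (g' := fun r => (1 / (1 + (p r / 16) ^ 2)) * (p' r / 16) - 8 * 1) (a := 1/4) (b := 3/4)
    (fun r hr => (((hp r hr).div_const 16).arctan).sub ((hasDerivAt_id r).const_mul 8))
    (by norm_num) (by norm_num) (by norm_num) ?_
  · have a1 := Real.arctan_lt_pi_div_two (p (3/4) / 16)
    have a2 := Real.neg_pi_div_two_lt_arctan (p (1/4) / 16)
    have := Real.pi_lt_four
    linarith
  · intro r hr
    have := key r hr
    have hq : 0 < 1 + (p r / 16) ^ 2 := by positivity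
    have : 8 ≤ (1 / (1 + (p r / 16) ^ 2)) * (p' r / 16) := by
      rw [one_div_mul_eq_div, le_div_iff₀ hq]
      nlinarith
    linarith

theorem exists_pos (h : GoodOp f lam Lam n) {γ : ℝ} (hγ2 : γ < 2) :
    ∃ μ ∈ evSet f γ, 0 < μ := by
  have hL := h.Lam_pos
  have hκ := h.gap
  set m := (lam * n - Lam) / (2 * Lam) with hm
  have hm0 : 0 < m := by positivity
  refine ⟨m * ((lam * n - Lam) / 2), ?_, by positivity⟩
  apply h.build (p := fun _ => m) (p' := fun _ => 0)
  · exact fun r _ => hasDerivAt_const _ _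
  · exact continuousOn_const
  · intro r hr
    have h1 := h.small_m hm0 (by rw [hm]; apply le_of_eq; field_simp)
    have h2 : r ^ (2 - γ) ≤ 1 := Real.rpow_le_one hr.1.le hr.2.le (by linarith)
    have h3 : m * ((lam * n - Lam) / 2) * r ^ (2 - γ) ≤ m * ((lam * n - Lam) / 2) * 1 := by
      gcongr
    simp only [mul_zero, neg_zero, zero_add]
    linarith

/-- If `p` is bounded below by a positive constant then `μ` can be increased. -/
theorem improve (h : GoodOp f lam Lam n) {γ μ p0 : ℝ} (hγ2 : γ < 2) (hμ : 0 < μ)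
    (hp0 : 0 < p0) {p p' : ℝ → ℝ} (hp : ∀ r ∈ Ioo (0:ℝ) 1, HasDerivAt p (p' r) r)
    (hc : ContinuousOn p' (Ioo 0 1)) (hlow : ∀ r ∈ Ioo (0:ℝ) 1, p0 ≤ p r)
    (hs : ∀ r ∈ Ioo (0:ℝ) 1, f (-(r * p' r) + p r + p r ^ 2) (-p r) = -(μ * r ^ (2 - γ))) :
    ∃ μ' ∈ evSet f γ, μ < μ' := by
  have hlam := h.lam_pos
  set β := 2 - γ with hβ
  have hβ0 : 0 < β := by linarith
  set A := (1 + μ) / (lam * p0) with hA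
  have hA0 : 0 < A := by positivity
  let η : ℝ → ℝ := fun r => Real.exp (-(A / β) * r ^ β)
  have hη : ∀ r ∈ Ioo (0:ℝ) 1, HasDerivAt η (-(A * r ^ (β - 1) * η r)) r := by
    intro r hr
    have h1 := ((Real.hasDerivAt_rpow_const (p := β) (Or.inl hr.1.ne')).const_mul (-(A / β))).exp
    refine h1.congr_deriv ?_
    change _ = -(A * r ^ (β - 1) * Real.exp (-(A / β) * r ^ β))
    field_simp
  have hηpos : ∀ r, 0 < η r := fun r => Real.exp_pos _
  set η0 := Real.exp (-(A / β)) with hη0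
  have hη0pos : 0 < η0 := Real.exp_pos _
  have hηle : ∀ r ∈ Ioo (0:ℝ) 1, η r ≤ 1 := by
    intro r hr
    have : 0 ≤ r ^ β := Real.rpow_nonneg hr.1.le _
    apply Real.exp_le_one_iff.2
    have : 0 ≤ A / β * r ^ β := by positivity
    linarith
  have hηge : ∀ r ∈ Ioo (0:ℝ) 1, η0 ≤ η r := by
    intro r hr
    apply Real.exp_le_exp.2
    have h1 : r ^ β ≤ 1 := Real.rpow_le_one hr.1.le hr.2.le hβ0.le
    have : A / β * r ^ β ≤ A / β * 1 := by gcongr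
    linarith
  refine ⟨μ + η0 / 2, ?_, by linarith⟩
  have cp : ContinuousOn p (Ioo 0 1) := fun r hr => (hp r hr).continuousAt.continuousWithinAt
  have cη : ContinuousOn η (Ioo 0 1) := fun r hr => (hη r hr).continuousAt.continuousWithinAt
  have hθ : ∀ r ∈ Ioo (0:ℝ) 1,
      HasDerivAt (fun r => 1 - 1 / 2 * η r) (1 / 2 * (A * r ^ (β - 1) * η r)) r := by
    intro r hr
    have := ((hη r hr).const_mul (1/2 : ℝ)).const_sub 1
    refine this.congr_deriv ?_
    ring
  apply h.build (p := fun r => (1 - 1 / 2 * η r) * p r)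
    (p' := fun r => (1 / 2 * (A * r ^ (β - 1) * η r)) * p r + (1 - 1 / 2 * η r) * p' r)
  · intro r hr
    exact (hθ r hr).mul (hp r hr)
  · have : ContinuousOn (fun r : ℝ => r ^ (β - 1)) (Ioo 0 1) :=
      fun r hr => (Real.continuousAt_rpow_const r _ (Or.inl hr.1.ne')).continuousWithinAt
    fun_prop
  · intro r hr
    have hr0 := hr.1
    have e1 : r * r ^ (β - 1) = r ^ β := by
      rw [mul_comm, ← Real.rpow_add_one hr0.ne']; congr 1; ring
    have hrb : 0 < r ^ β := Real.rpow_pos_of_pos hr0 _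
    have hpr := hlow r hr
    have l1 := hηle r hr
    have l2 := hηge r hr
    have l3 := hηpos r
    set y := η r with hy
    have ht0 : 0 < 1 - 1 / 2 * y := by linarith
    have hpp : 0 < p r := by linarith
    have hdiff : -(r * ((1 / 2 * (A * r ^ (β - 1) * y)) * p r + (1 - 1 / 2 * y) * p' r))
        + (1 - 1 / 2 * y) * p r + ((1 - 1 / 2 * y) * p r) ^ 2
        = (1 - 1 / 2 * y) * (-(r * p' r) + p r + p r ^ 2)
          - (1 / 2 * A * r ^ β * y * p r + (1 - 1 / 2 * y) * (1 / 2 * y) * p r ^ 2) := by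
      rw [← e1]; ring
    set a := (1 - 1 / 2 * y) * (-(r * p' r) + p r + p r ^ 2) with ha
    set z := 1 / 2 * A * r ^ β * y * p r + (1 - 1 / 2 * y) * (1 / 2 * y) * p r ^ 2 with hz
    have hz0 : 1 / 2 * A * r ^ β * y * p0 ≤ z := by
      have q1 : 1 / 2 * A * r ^ β * y * p0 ≤ 1 / 2 * A * r ^ β * y * p r := by gcongr
      have q2 : 0 ≤ (1 - 1 / 2 * y) * (1 / 2 * y) * p r ^ 2 := by positivity
      linarith
    have hz1 : 0 ≤ z := le_trans (by positivity) hz0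
    have q3 := (h.fst (a - z) a (-((1 - 1 / 2 * y) * p r)) (by linarith)).1
    have q4 : f a (-((1 - 1 / 2 * y) * p r)) = (1 - 1 / 2 * y) * -(μ * r ^ β) := by
      rw [← hs r hr, ← h.hom _ _ _ ht0, ha]
      congr 1; ring
    have q5 : lam * (1 / 2 * A * r ^ β * y * p0) = 1 / 2 * (1 + μ) * r ^ β * y := by
      rw [hA]; field_simp
    have q6 : lam * (1 / 2 * A * r ^ β * y * p0) ≤ lam * z := by gcongr
    have q7 : r ^ β * η0 ≤ r ^ β * y := by gcongr
    rw [hdiff]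
    nlinarith

theorem alt (h : GoodOp f lam Lam n) {γ μ : ℝ} (hγ2 : γ < 2) (hμ : 0 < μ)
    {p p' : ℝ → ℝ} (hp : ∀ r ∈ Ioo (0:ℝ) 1, HasDerivAt p (p' r) r)
    (hc : ContinuousOn p' (Ioo 0 1))
    (hs : ∀ r ∈ Ioo (0:ℝ) 1, f (-(r * p' r) + p r + p r ^ 2) (-p r) = -(μ * r ^ (2 - γ)))
    (hmax : ∀ μ' ∈ evSet f γ, μ' ≤ μ) :
    ∃ R ∈ Ioo (0:ℝ) 1, ∃ K, 0 < K ∧ ∀ r ∈ Ioc 0 R, p r ≤ K * r ^ (2 - γ) := by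
  have hL := h.Lam_pos
  have hlam := h.lam_pos
  have hn : 0 < n := by linarith [h.n_pos]
  have hκ := h.gap
  set κ := lam * n - Lam with hκd
  set β := 2 - γ with hβ
  have hβ0 : 0 < β := by linarith
  set K := 2 * μ / κ with hK
  have hK0 : 0 < K := by positivity
  obtain ⟨R, hR, hRK⟩ : ∃ R ∈ Ioo (0:ℝ) 1, K * R ^ β < κ / (2 * Lam) := by
    have ht : Tendsto (fun r : ℝ => K * r ^ β) (nhdsWithin 0 (Ioi 0)) (nhds 0) := by
      have := (Real.continuousAt_rpow_const 0 β (Or.inr hβ0.le)).tendsto.const_mul K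
      rw [Real.zero_rpow hβ0.ne', mul_zero] at this
      exact this.mono_left nhdsWithin_le_nhds
    have h1 := ht.eventually (gt_mem_nhds (show (0:ℝ) < κ / (2 * Lam) by positivity))
    have h2 : ∀ᶠ r : ℝ in nhdsWithin 0 (Ioi 0), r ∈ Ioo (0:ℝ) 1 :=
      Ioo_mem_nhdsGT (by norm_num)
    obtain ⟨R, hh⟩ := (h2.and h1).exists
    exact ⟨R, hh⟩
  refine ⟨R, hR, K, hK0, ?_⟩
  by_contra hcon
  push Not at hcon
  obtain ⟨r1, hr1, hbig⟩ := hcon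
  have hr1' : r1 ∈ Ioo (0:ℝ) 1 := ⟨hr1.1, lt_of_le_of_lt hr1.2 hR.2⟩
  have hr1b : 0 < r1 ^ β := Real.rpow_pos_of_pos hr1.1 _
  have hr1R : r1 ^ β ≤ R ^ β := Real.rpow_le_rpow hr1.1.le hr1.2 hβ0.le
  -- backward barrier
  set m := min (p r1) (κ / (2 * Lam)) with hm
  have hmK : K * r1 ^ β < m := by
    apply lt_min hbig
    exact lt_of_le_of_lt (by gcongr) hRK
  have hm0 : 0 < m := lt_trans (by positivity) hmK
  have hmL : Lam * m ≤ κ / 2 := by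
    have : m ≤ κ / (2 * Lam) := min_le_right _ _
    calc Lam * m ≤ Lam * (κ / (2 * Lam)) := by gcongr
      _ = κ / 2 := by field_simp
  have b1 : ∀ r ∈ Ioc 0 r1, m ≤ p r := by
    intro r hr
    have hsub : ∀ x ∈ Icc r r1, x ∈ Ioo (0:ℝ) 1 :=
      fun x hx => ⟨lt_of_lt_of_le hr.1 hx.1, lt_of_le_of_lt hx.2 hr1'.2⟩
    refine barrier_bwd (fun x hx => hp x (hsub x hx)) hr.2 (min_le_left _ _) ?_
    intro x hx he
    by_contra hh
    push Not at hh
    have hx0 := (hsub x hx).1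
    have e := hs x (hsub x hx)
    rw [he] at e
    have h1 := (h.fst (-(x * p' x) + m + m ^ 2) (m + m ^ 2) (-m)
      (by nlinarith [mul_nonneg hx0.le hh])).1
    have h2 := h.small_m hm0 hmL
    have h3 : 0 ≤ lam * (m + m ^ 2 - (-(x * p' x) + m + m ^ 2)) := by
      have := mul_nonneg hx0.le hh
      have : 0 ≤ m + m ^ 2 - (-(x * p' x) + m + m ^ 2) := by linarith
      positivity
    have h4 : x ^ β ≤ r1 ^ β := Real.rpow_le_rpow hx0.le hx.2 hβ0.le
    have h5 : μ * x ^ β ≤ μ * r1 ^ β := by gcongr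
    have h6 : K * r1 ^ β * (κ / 2) = μ * r1 ^ β := by rw [hK]; field_simp
    have h7 : K * r1 ^ β * (κ / 2) < m * (κ / 2) := by gcongr
    linarith
  -- forward barrier
  set m' := min m (μ * r1 ^ β / (2 * (Lam * n))) with hm'
  have hm'0 : 0 < m' := lt_min hm0 (by positivity)
  have b2 : ∀ r ∈ Ico r1 1, m' ≤ p r := by
    intro r hr
    have hsub : ∀ x ∈ Icc r1 r, x ∈ Ioo (0:ℝ) 1 :=
      fun x hx => ⟨lt_of_lt_of_le hr1.1 hx.1, lt_of_le_of_lt hx.2 hr.2⟩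
    refine barrier_fwd (fun x hx => hp x (hsub x hx)) hr.1
      ((min_le_left _ _).trans (min_le_left _ _)) ?_
    intro x hx he
    by_contra hh
    push Not at hh
    have hx0 := (hsub x hx).1
    have e := hs x (hsub x hx)
    rw [he] at e
    have hxp : x * p' x ≤ 0 := mul_nonpos_of_nonneg_of_nonpos hx0.le hh
    have hA : 0 ≤ -(x * p' x) + m' + m' ^ 2 := by nlinarith [sq_nonneg m']
    have h1 := (h.fst 0 (-(x * p' x) + m' + m' ^ 2) (-m') hA).1
    have h1' : 0 ≤ lam * (-(x * p' x) + m' + m' ^ 2 - 0) := by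
      rw [sub_zero]; positivity
    have h2 := (h.snd 0 (-m') 0 (by linarith)).2
    have h0 := h.zero
    have h4 : r1 ^ β ≤ x ^ β := Real.rpow_le_rpow hr1.1.le hx.1 hβ0.le
    have h5 : μ * r1 ^ β ≤ μ * x ^ β := by gcongr
    have h6 : Lam * n * m' ≤ μ * r1 ^ β / 2 := by
      calc Lam * n * m' ≤ Lam * n * (μ * r1 ^ β / (2 * (Lam * n))) := by
            gcongr; exact min_le_right _ _
        _ = μ * r1 ^ β / 2 := by field_simp
    have : 0 < μ * r1 ^ β := by positivity
    linarith
  obtain ⟨μ', hμ', hlt⟩ := h.improve hγ2 hμ hm'0 hp hc (fun r hr => by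
    rcases le_total r r1 with hh | hh
    · exact (min_le_left _ _).trans (b1 r ⟨hr.1, hh⟩)
    · exact b2 r ⟨hh, hr.2⟩) hs
  linarith [hmax μ' hμ']

theorem bounded (h : GoodOp f lam Lam n) {γ μ : ℝ} (hγ2 : γ < 2) (hμ : 0 < μ)
    (hmax : ∀ μ' ∈ evSet f γ, μ' ≤ μ) {u : ℝ → ℝ} (hu : ContDiffOn ℝ 2 u (Ioo 0 1))
    (hpos : ∀ r ∈ Ioo (0:ℝ) 1, 0 < u r) (hcont : ContinuousOn u (Ioc 0 1))
    (he : ∀ r ∈ Ioo (0:ℝ) 1,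
      f (deriv (deriv u) r) (deriv u r / r) + μ * u r * r ^ (-γ) = 0) :
    ∃ C : ℝ, ∀ r ∈ Ioo (0:ℝ) 1, |u r| ≤ C := by
  obtain ⟨p, p', hp, hc, h1, h2⟩ := log_deriv_facts hu hpos
  have hs : ∀ r ∈ Ioo (0:ℝ) 1,
      f (-(r * p' r) + p r + p r ^ 2) (-p r) = -(μ * r ^ (2 - γ)) := by
    intro r hr
    have e := he r hr
    have hU := hpos r hr
    have hr0 := hr.1
    rw [h2 r hr, h1 r hr, h.log_eq hr.1 hU] at e
    rcases mul_eq_zero.1 e with e | e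
    · have : 0 < u r / r ^ 2 := by positivity
      linarith
    · linarith
  obtain ⟨R, hR, K, hK, hle⟩ := h.alt hγ2 hμ hp hc hs hmax
  set β := 2 - γ with hβ
  have hβ0 : 0 < β := by linarith
  obtain ⟨C1, hC1⟩ := (isCompact_Icc (a := R) (b := 1)).exists_bound_of_continuousOn
    (hcont.mono (fun x hx => ⟨lt_of_lt_of_le hR.1 hx.1, hx.2⟩))
  have hder : ∀ r ∈ Ioo (0:ℝ) 1, HasDerivAt (fun r => u r * Real.exp (K / β * r ^ β))
      (deriv u r * Real.exp (K / β * r ^ β) +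
        u r * (Real.exp (K / β * r ^ β) * (K / β * (β * r ^ (β - 1))))) r := by
    intro r hr
    exact ((c2_facts hu).1 r hr).mul
      ((Real.hasDerivAt_rpow_const (p := β) (Or.inl hr.1.ne')).const_mul (K / β)).exp
  refine ⟨max C1 (u R * Real.exp (K / β * R ^ β)), fun r hr => ?_⟩
  rcases le_total R r with hh | hh
  · exact le_max_of_le_left (hC1 r ⟨hh, hr.2.le⟩)
  · apply le_max_of_le_right
    have hm := mono_aux hder hr.1 hh hR.2 ?_
    · rw [abs_of_pos (hpos r hr)]
      refine le_trans ?_ hm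
      have : 1 ≤ Real.exp (K / β * r ^ β) := by
        apply Real.one_le_exp
        have := Real.rpow_nonneg hr.1.le β
        positivity
      have hU := hpos r hr
      nlinarith
    · intro x hx
      have hx' : x ∈ Ioo (0:ℝ) 1 := ⟨lt_of_lt_of_le hr.1 hx.1, lt_of_le_of_lt hx.2 hR.2⟩
      have hx0 := hx'.1
      have e1 : x ^ (β - 1) = x ^ β / x := Real.rpow_sub_one hx0.ne' β
      rw [h1 x hx', e1]
      have hle' := hle x ⟨hx0, hx.2⟩
      have hU := hpos x hx'
      have : -(p x * u x / x) * Real.exp (K / β * x ^ β) +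
        u x * (Real.exp (K / β * x ^ β) * (K / β * (β * (x ^ β / x))))
        = u x / x * Real.exp (K / β * x ^ β) * (K * x ^ β - p x) := by
        field_simp
        ring
      rw [this]
      have : 0 ≤ K * x ^ β - p x := by linarith
      have := Real.exp_pos (K / β * x ^ β)
      positivity

/-- The derivative of a solution is bounded near `1`. -/
theorem deriv_bounded (h : GoodOp f lam Lam n) {γ μ : ℝ} {u : ℝ → ℝ}
    (hu : ContDiffOn ℝ 2 u (Ioo 0 1)) (hcont : ContinuousOn u (Ioc 0 1))
    (he : ∀ r ∈ Ioo (0:ℝ) 1,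
      f (deriv (deriv u) r) (deriv u r / r) + μ * u r * r ^ (-γ) = 0) :
    ∃ B : ℝ, ∀ r ∈ Ico (1/2:ℝ) 1, |deriv u r| ≤ B := by
  have hlam := h.lam_pos
  have hL := h.Lam_pos
  have hn : 0 < n := by linarith [h.n_pos]
  obtain ⟨-, h2, -⟩ := c2_facts hu
  obtain ⟨C1, hC1⟩ := (isCompact_Icc (a := (1/2:ℝ)) (b := 1)).exists_bound_of_continuousOn
    (f := fun r => μ * u r * r ^ (-γ)) (by
      apply ContinuousOn.mul
      · apply ContinuousOn.mul continuousOn_const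
        exact hcont.mono (fun x hx => ⟨by linarith [hx.1], hx.2⟩)
      · intro r hr
        exact (Real.continuousAt_rpow_const r _
          (Or.inl (by linarith [hr.1] : (0:ℝ) < r).ne')).continuousWithinAt)
  have hC10 : 0 ≤ C1 := (norm_nonneg _).trans (hC1 1 ⟨by norm_num, le_rfl⟩)
  set D := (C1 + 2 * (Lam * n)) / lam with hD
  have hD0 : 0 ≤ D := by positivity
  have hb : ∀ r ∈ Ico (1/2:ℝ) 1, |deriv (deriv u) r| ≤ D * (1 + |deriv u r|) := by
    intro r hr
    have hr' : r ∈ Ioo (0:ℝ) 1 := ⟨by linarith [hr.1], hr.2⟩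
    have h3 := h.fst_bound (deriv (deriv u) r) (deriv u r / r)
    have h4 : |f (deriv (deriv u) r) (deriv u r / r)| ≤ C1 := by
      have : f (deriv (deriv u) r) (deriv u r / r) = -(μ * u r * r ^ (-γ)) := by
        linarith [he r hr']
      rw [this, abs_neg]
      exact hC1 r ⟨hr.1, hr.2.le⟩
    have h5 : |deriv u r / r| ≤ 2 * |deriv u r| := by
      rw [abs_div, abs_of_pos hr'.1, div_le_iff₀ hr'.1]
      nlinarith [abs_nonneg (deriv u r), hr.1]
    have h6 : Lam * n * |deriv u r / r| ≤ Lam * n * (2 * |deriv u r|) := by gcongr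
    rw [hD, div_mul_eq_mul_div, le_div_iff₀ hlam]
    have h7 := abs_nonneg (deriv u r)
    have : 0 ≤ C1 * |deriv u r| := by positivity
    have : 0 ≤ Lam * n := by positivity
    nlinarith
  have hder : ∀ r ∈ Ioo (0:ℝ) 1,
      HasDerivAt (fun r => -((1 + deriv u r ^ 2) * Real.exp (-(4 * D) * r)))
      (-((2 * deriv u r ^ 1 * deriv (deriv u) r) * Real.exp (-(4 * D) * r)
        + (1 + deriv u r ^ 2) * (Real.exp (-(4 * D) * r) * (-(4 * D) * 1)))) r := by
    intro r hr
    have := ((((h2 r hr).pow 2).const_add 1).mul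
      (((hasDerivAt_id r).const_mul (-(4 * D))).exp)).neg
    refine this.congr_deriv ?_
    simp
  refine ⟨(1 + deriv u (1/2) ^ 2) * Real.exp (4 * D), fun r hr => ?_⟩
  have hm := mono_aux hder (by norm_num) hr.1 hr.2 ?_
  · have e1 : Real.exp (-(4 * D) * (1/2)) ≤ 1 := by
      apply Real.exp_le_one_iff.2; linarith
    have e2 : Real.exp (-(4 * D)) ≤ Real.exp (-(4 * D) * r) := by
      apply Real.exp_le_exp.2
      nlinarith [hr.2]
    have e3 : (1 + deriv u r ^ 2) * Real.exp (-(4 * D)) ≤ 1 + deriv u (1/2) ^ 2 := by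
      have a1 : (1 + deriv u r ^ 2) * Real.exp (-(4 * D)) ≤
        (1 + deriv u r ^ 2) * Real.exp (-(4 * D) * r) := by gcongr
      have a2 : (1 + deriv u (1/2) ^ 2) * Real.exp (-(4 * D) * (1/2)) ≤
        (1 + deriv u (1/2) ^ 2) * 1 := by gcongr
      linarith
    rw [Real.exp_neg, ← div_eq_mul_inv, div_le_iff₀ (Real.exp_pos _)] at e3
    refine le_trans ?_ e3
    have := sq_abs (deriv u r)
    nlinarith [sq_nonneg (|deriv u r| - 1)]
  · intro x hx
    have hx' : x ∈ Ico (1/2:ℝ) 1 := ⟨hx.1, lt_of_le_of_lt hx.2 hr.2⟩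
    have h3 := hb x hx'
    set d := deriv u x
    set dd := deriv (deriv u) x
    have h4 : d * dd ≤ |d| * (D * (1 + |d|)) := by
      calc d * dd ≤ |d * dd| := le_abs_self _
        _ = |d| * |dd| := abs_mul _ _
        _ ≤ _ := by gcongr
    have h5 : d * dd ≤ 2 * D * (1 + d ^ 2) := by
      have := sq_abs d
      have : |d| * (1 + |d|) ≤ 2 * (1 + d ^ 2) := by nlinarith [sq_nonneg (|d| - 1)]
      have := mul_le_mul_of_nonneg_left this hD0
      linarith
    have := Real.exp_pos (-(4 * D) * x)
    have e : -(2 * d ^ 1 * dd * Real.exp (-(4 * D) * x)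
        + (1 + d ^ 2) * (Real.exp (-(4 * D) * x) * (-(4 * D) * 1)))
        = 2 * Real.exp (-(4 * D) * x) * (2 * D * (1 + d ^ 2) - d * dd) := by ring
    rw [e]
    have : 0 ≤ 2 * D * (1 + d ^ 2) - d * dd := by linarith
    positivity

theorem simple (h : GoodOp f lam Lam n) {γ μ : ℝ} {u v : ℝ → ℝ}
    (hu : ContDiffOn ℝ 2 u (Ioo 0 1)) (hupos : ∀ r ∈ Ioo (0:ℝ) 1, 0 < u r)
    (hucont : ContinuousOn u (Ioc 0 1)) (hu1 : u 1 = 0)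
    (hue : ∀ r ∈ Ioo (0:ℝ) 1,
      f (deriv (deriv u) r) (deriv u r / r) + μ * u r * r ^ (-γ) = 0)
    (hv : ContDiffOn ℝ 2 v (Ioo 0 1)) (hvpos : ∀ r ∈ Ioo (0:ℝ) 1, 0 < v r)
    (hvcont : ContinuousOn v (Ioc 0 1)) (hv1 : v 1 = 0)
    (hve : ∀ r ∈ Ioo (0:ℝ) 1,
      f (deriv (deriv v) r) (deriv v r / r) + μ * v r * r ^ (-γ) = 0) :
    ∃ t : ℝ, 0 < t ∧ ∀ r ∈ Ioo (0:ℝ) 1, u r = t * v r := by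
  have hlam := h.lam_pos
  have hL := h.Lam_pos
  have hn : 0 < n := by linarith [h.n_pos]
  obtain ⟨du, ddu, -⟩ := c2_facts hu
  obtain ⟨dv, ddv, -⟩ := c2_facts hv
  obtain ⟨B, hB⟩ := h.deriv_bounded hu hucont hue
  obtain ⟨B', hB'⟩ := h.deriv_bounded hv hvcont hve
  set W : ℝ → ℝ := fun r => deriv u r * v r - u r * deriv v r with hW
  set W' : ℝ → ℝ := fun r => deriv (deriv u) r * v r - u r * deriv (deriv v) r with hW'
  have dW : ∀ r ∈ Ioo (0:ℝ) 1, HasDerivAt W (W' r) r := by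
    intro r hr
    have := ((ddu r hr).mul (dv r hr)).sub ((du r hr).mul (ddv r hr))
    refine this.congr_deriv ?_
    simp only [hW']; ring
  set C := Lam * n / lam with hC
  have hC0 : 0 < C := by positivity
  have hbd : ∀ r ∈ Ioo (0:ℝ) 1, |W' r| ≤ C / r * |W r| := by
    intro r hr
    have hU := hupos r hr
    have hV := hvpos r hr
    have hr0 := hr.1
    have e : f (v r * deriv (deriv u) r) (v r * (deriv u r / r))
        = f (u r * deriv (deriv v) r) (u r * (deriv v r / r)) := by
      rw [h.hom _ _ _ hV, h.hom _ _ _ hU]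
      have e1 := hue r hr
      have e2 := hve r hr
      linear_combination v r * e1 - u r * e2
    have h1 := h.fst_eq_bound e
    have e3 : v r * deriv (deriv u) r - u r * deriv (deriv v) r = W' r := by
      simp only [hW']; ring
    have e4 : v r * (deriv u r / r) - u r * (deriv v r / r) = W r / r := by
      simp only [hW]; ring
    rw [e3, e4, abs_div, abs_of_pos hr0] at h1
    have : C / r * |W r| = (Lam * n * (|W r| / r)) / lam := by rw [hC]; field_simp
    rw [this, le_div_iff₀ hlam]
    linarith
  have hder : ∀ r ∈ Ioo (0:ℝ) 1, HasDerivAt (fun r => W r ^ 2 * r ^ (2 * C))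
      ((2 * W r ^ 1 * W' r) * r ^ (2 * C) + W r ^ 2 * (2 * C * r ^ (2 * C - 1))) r := by
    intro r hr
    have := ((dW r hr).pow 2).mul (Real.hasDerivAt_rpow_const (p := 2 * C) (Or.inl hr.1.ne'))
    refine this.congr_deriv ?_
    simp
  have hnn : ∀ r ∈ Ioo (0:ℝ) 1,
      0 ≤ (2 * W r ^ 1 * W' r) * r ^ (2 * C) + W r ^ 2 * (2 * C * r ^ (2 * C - 1)) := by
    intro r hr
    have hr0 := hr.1
    rw [Real.rpow_sub_one hr0.ne']
    have hp := Real.rpow_pos_of_pos hr0 (2 * C)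
    have h1 : -(W r * W' r) ≤ C / r * W r ^ 2 := by
      calc -(W r * W' r) ≤ |W r * W' r| := neg_le_abs _
        _ = |W r| * |W' r| := abs_mul _ _
        _ ≤ |W r| * (C / r * |W r|) := by gcongr; exact hbd r hr
        _ = C / r * |W r| ^ 2 := by ring
        _ = _ := by rw [sq_abs]
    have e : (2 * W r ^ 1 * W' r) * r ^ (2 * C) + W r ^ 2 * (2 * C * (r ^ (2 * C) / r))
        = 2 * r ^ (2 * C) * (C / r * W r ^ 2 - -(W r * W' r)) := by ring
    rw [e]
    have : 0 ≤ C / r * W r ^ 2 - -(W r * W' r) := by linarith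
    positivity
  have tu : ∀ w : ℝ → ℝ, ContinuousOn w (Ioc 0 1) → w 1 = 0 →
      Tendsto w (nhdsWithin 1 (Iio 1)) (nhds 0) := by
    intro w hw hw1
    have h1 := hw 1 ⟨by norm_num, le_rfl⟩
    rw [ContinuousWithinAt, hw1] at h1
    refine h1.mono_left ?_
    rw [nhdsWithin_le_iff]
    filter_upwards [Ioo_mem_nhdsLT (show (0:ℝ) < 1 by norm_num)] with x hx
    exact ⟨hx.1, hx.2.le⟩
  have hev : ∀ᶠ r : ℝ in nhdsWithin 1 (Iio 1), r ∈ Ioo (1/2:ℝ) 1 :=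
    Ioo_mem_nhdsLT (by norm_num)
  have tW : Tendsto W (nhdsWithin 1 (Iio 1)) (nhds 0) := by
    have hlim : Tendsto (fun r => B * |v r| + |u r| * B') (nhdsWithin 1 (Iio 1)) (nhds 0) := by
      have := ((tu v hvcont hv1).abs.const_mul B).add ((tu u hucont hu1).abs.mul_const B')
      simpa using this
    apply squeeze_zero_norm' _ hlim
    filter_upwards [hev] with r hr
    have hr' : r ∈ Ico (1/2:ℝ) 1 := ⟨hr.1.le, hr.2⟩
    calc ‖W r‖ ≤ |deriv u r * v r| + |u r * deriv v r| := abs_sub _ _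
      _ = |deriv u r| * |v r| + |u r| * |deriv v r| := by rw [abs_mul, abs_mul]
      _ ≤ _ := by
        gcongr
        · exact hB r hr'
        · exact hB' r hr'
  have W0 : ∀ r ∈ Ioo (0:ℝ) 1, W r = 0 := by
    intro r hr
    have hlim : Tendsto (fun x => W x ^ 2) (nhdsWithin 1 (Iio 1)) (nhds 0) := by
      simpa using tW.pow 2
    have hle : W r ^ 2 * r ^ (2 * C) ≤ 0 := by
      apply ge_of_tendsto hlim
      filter_upwards [Ioo_mem_nhdsLT hr.2] with x hx
      have hx0 : 0 < x := lt_trans hr.1 hx.1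
      have hm := mono_aux hder hr.1 hx.1.le hx.2
        (fun y hy => hnn y ⟨lt_of_lt_of_le hr.1 hy.1, lt_of_le_of_lt hy.2 hx.2⟩)
      refine hm.trans ?_
      have : x ^ (2 * C) ≤ 1 := Real.rpow_le_one hx0.le hx.2.le (by positivity)
      nlinarith [sq_nonneg (W x)]
    have hp := Real.rpow_pos_of_pos hr.1 (2 * C)
    have : W r ^ 2 ≤ 0 := by
      by_contra hh
      push Not at hh
      have := mul_pos hh hp
      linarith
    exact pow_eq_zero_iff (two_ne_zero) |>.1 (le_antisymm this (sq_nonneg _))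
  have dq : ∀ r ∈ Ioo (0:ℝ) 1, HasDerivAt (fun r => u r / v r) 0 r := by
    intro r hr
    have := (du r hr).div (dv r hr) (hvpos r hr).ne'
    refine this.congr_deriv ?_
    have h0 := W0 r hr
    simp only [hW] at h0
    rw [h0, zero_div]
  have half : (1/2:ℝ) ∈ Ioo (0:ℝ) 1 := by constructor <;> norm_num
  have hconst : ∀ r ∈ Ioo (0:ℝ) 1, u r / v r = u (1/2) / v (1/2) := by
    intro r hr
    have dq' : ∀ r ∈ Ioo (0:ℝ) 1, HasDerivAt (fun r => -(u r / v r)) 0 r := by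
      intro r hr
      exact (dq r hr).neg.congr_deriv neg_zero
    rcases le_total r (1/2) with hh | hh
    · have a1 := mono_aux dq hr.1 hh half.2 (fun _ _ => le_rfl)
      have a2 := mono_aux dq' hr.1 hh half.2 (fun _ _ => le_rfl)
      linarith
    · have a1 := mono_aux dq half.1 hh hr.2 (fun _ _ => le_rfl)
      have a2 := mono_aux dq' half.1 hh hr.2 (fun _ _ => le_rfl)
      linarith
  refine ⟨u (1/2) / v (1/2), div_pos (hupos _ half) (hvpos _ half), fun r hr => ?_⟩
  rw [← hconst r hr, div_mul_cancel₀ _ (hvpos r hr).ne']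

end GoodOp

theorem stmt15 (N : ℕ) (hN : 2 ≤ N) (lam Lam : ℝ) (hlam : 0 < lam) (hlL : lam ≤ Lam)
    (hNp : 2 < lam / Lam * ((N : ℝ) - 1) + 1)
    (F : Matrix (Fin N) (Fin N) ℝ → ℝ)
    (hF1 : UnifElliptic N lam Lam F) (hF2 : RotInvariant N F) (hF3 : PosHomog N F)
    (γ : ℝ) (hγ0 : 0 < γ) (hγ2 : γ < 2) :
    (∀ u : ℝ → ℝ,
      (ContDiffOn ℝ 2 u (Ioo 0 1) ∧ (∀ r ∈ Ioo (0:ℝ) 1, 0 < u r) ∧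
        ContinuousOn u (Ioc 0 1) ∧ u 1 = 0 ∧
        (∀ r ∈ Ioo (0:ℝ) 1,
          F (Dmat N (deriv (deriv u) r) (deriv u r / r))
            + radialEV N F γ * u r * r ^ (-γ) = 0)) →
      ∃ C : ℝ, ∀ r ∈ Ioo (0:ℝ) 1, |u r| ≤ C) ∧
    (∀ u v : ℝ → ℝ,
      (ContDiffOn ℝ 2 u (Ioo 0 1) ∧ (∀ r ∈ Ioo (0:ℝ) 1, 0 < u r) ∧
        ContinuousOn u (Ioc 0 1) ∧ u 1 = 0 ∧
        (∀ r ∈ Ioo (0:ℝ) 1,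
          F (Dmat N (deriv (deriv u) r) (deriv u r / r))
            + radialEV N F γ * u r * r ^ (-γ) = 0)) →
      (ContDiffOn ℝ 2 v (Ioo 0 1) ∧ (∀ r ∈ Ioo (0:ℝ) 1, 0 < v r) ∧
        ContinuousOn v (Ioc 0 1) ∧ v 1 = 0 ∧
        (∀ r ∈ Ioo (0:ℝ) 1,
          F (Dmat N (deriv (deriv v) r) (deriv v r / r))
            + radialEV N F γ * v r * r ^ (-γ) = 0)) →
      ∃ t : ℝ, 0 < t ∧ ∀ r ∈ Ioo (0:ℝ) 1, u r = t * v r) := by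
  have h := goodOp_of N hN lam Lam hlam hlL hNp F hF1 hF3
  set μ := radialEV N F γ with hμ
  have hev : μ = sSup (evSet (fun a b => F (Dmat N a b)) γ) := rfl
  have hbdd := h.bdd hγ0 hγ2
  have hmax : ∀ μ' ∈ evSet (fun a b => F (Dmat N a b)) γ, μ' ≤ μ := by
    intro μ' h'
    rw [hev]
    exact le_csSup hbdd h'
  have hpos : 0 < μ := by
    obtain ⟨μ', h', h0⟩ := h.exists_pos hγ2
    exact lt_of_lt_of_le h0 (hmax μ' h')
  constructor
  · rintro u ⟨hu, hup, huc, -, hue⟩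
    exact h.bounded hγ2 hpos hmax hu hup huc hue
  · rintro u v ⟨hu, hup, huc, hu1, hue⟩ ⟨hv, hvp, hvc, hv1, hve⟩
    exact h.simple hu hup huc hu1 hue hv hvp hvc hv1 hve

end
end

section
/- Global radial solution on the half-line: let 0 < γ < 2. There exists a C² function u : (0,∞) → ℝ satisfying the ODE u''(r) = M₊(−((N−1)/r)·K₊(u'(r)) − u(r)·r^{−γ}) for all r > 0 (equivalently 𝓜⁺[u](r) + u(r)·r^{−γ} = 0), such that lim_{r→0⁺} u(r) = 1, and there exists r̄ > 0 with u(r̄) = 0 and u(r) > 0 for all r ∈ (0, r̄). -/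
open Set Real Filter MeasureTheory

noncomputable section

/-- The radial expression of the Pucci maximal operator `𝓜⁺` applied to a radial
function `u = u(r)`. -/
def pucciP (lam Lam : ℝ) (N : ℕ) (u : ℝ → ℝ) (r : ℝ) : ℝ :=
  Lam * max (deriv (deriv u) r) 0 - lam * max (-(deriv (deriv u) r)) 0 +
  ((N : ℝ) - 1) * (Lam * max (deriv u r / r) 0 - lam * max (-(deriv u r / r)) 0)

/-- The radial expression of the Pucci minimal operator `𝓜⁻` applied to a radial
function `u = u(r)`. -/
def pucciM (lam Lam : ℝ) (N : ℕ) (u : ℝ → ℝ) (r : ℝ) : ℝ :=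
  lam * max (deriv (deriv u) r) 0 - Lam * max (-(deriv (deriv u) r)) 0 +
  ((N : ℝ) - 1) * (lam * max (deriv u r / r) 0 - Lam * max (-(deriv u r / r)) 0)

/-- The radial principal eigenvalue `λ̄'_γ` on the punctured unit ball for a radial
operator `Op`. -/
def radialEVop (Op : (ℝ → ℝ) → ℝ → ℝ) (γ : ℝ) : ℝ :=
  sSup {μ : ℝ | ∃ u : ℝ → ℝ, ContDiffOn ℝ 2 u (Ioo 0 1) ∧
    (∀ r ∈ Ioo (0:ℝ) 1, 0 < u r) ∧
    (∀ r ∈ Ioo (0:ℝ) 1, Op u r + μ * u r * r ^ (-γ) ≤ 0)}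

/-- `K₊(s) = Λ·s` for `s ≥ 0` and `λ·s` for `s < 0`. -/
def Kplus (lam Lam s : ℝ) : ℝ := if 0 ≤ s then Lam * s else lam * s

/-- `M₊(s) = s/Λ` for `s ≥ 0` and `s/λ` for `s < 0`. -/
def Mplus (lam Lam s : ℝ) : ℝ := if 0 ≤ s then s / Lam else s / lam


lemma slope_aux (p q l L y z : ℝ) (hp : l ≤ p) (hpL : p ≤ L) (hq : l ≤ q) (hqL : q ≤ L) :
    ∃ v, l ≤ v ∧ v ≤ L ∧
      (if 0 ≤ y then p * y else q * y) - (if 0 ≤ z then p * z else q * z) = v * (y - z) := by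
  by_cases hy : 0 ≤ y <;> by_cases hz : 0 ≤ z <;> simp only [hy, hz, if_true, if_false]
  · exact ⟨p, hp, hpL, by ring⟩
  · have h0 : 0 < y - z := by linarith
    refine ⟨(p * y - q * z) / (y - z), ?_, ?_, ?_⟩
    · rw [le_div_iff₀ h0]; nlinarith
    · rw [div_le_iff₀ h0]; nlinarith
    · field_simp
  · have h0 : 0 < z - y := by linarith
    refine ⟨(p * z - q * y) / (z - y), ?_, ?_, ?_⟩
    · rw [le_div_iff₀ h0]; nlinarith
    · rw [div_le_iff₀ h0]; nlinarith
    · field_simp; ring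
  · exact ⟨q, hq, hqL, by ring⟩

lemma K_slope (lam Lam y z : ℝ) (hlL : lam ≤ Lam) :
    ∃ v, lam ≤ v ∧ v ≤ Lam ∧ Kplus lam Lam y - Kplus lam Lam z = v * (y - z) := by
  exact slope_aux Lam lam lam Lam y z hlL le_rfl le_rfl hlL

lemma M_slope (lam Lam y z : ℝ) (hlam : 0 < lam) (hlL : lam ≤ Lam) :
    ∃ v, 1 / Lam ≤ v ∧ v ≤ 1 / lam ∧ Mplus lam Lam y - Mplus lam Lam z = v * (y - z) := by
  have h := one_div_le_one_div_of_le hlam hlL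
  obtain ⟨v, h1, h2, h3⟩ := slope_aux (1 / Lam) (1 / lam) (1 / Lam) (1 / lam) y z le_rfl h h le_rfl
  refine ⟨v, h1, h2, ?_⟩
  rw [← h3]; simp only [Mplus, div_eq_inv_mul, mul_one]

lemma K_M (lam Lam y : ℝ) (hlam : 0 < lam) (hlL : lam ≤ Lam) :
    Kplus lam Lam (Mplus lam Lam y) = y := by
  have hL : 0 < Lam := by linarith
  unfold Mplus
  split_ifs with h
  · have : 0 ≤ y / Lam := by positivity
    simp only [Kplus, this, if_true]; field_simp
  · have : ¬ 0 ≤ y / lam := by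
      push Not at h ⊢; exact div_neg_of_neg_of_pos h hlam
    simp only [Kplus, this, if_false]; field_simp

lemma K_eq_max (lam Lam y : ℝ) : Lam * max y 0 - lam * max (-y) 0 = Kplus lam Lam y := by
  unfold Kplus
  split_ifs with h
  · rw [max_eq_left h, max_eq_right (by linarith)]; ring
  · rw [max_eq_right (by linarith), max_eq_left (by linarith)]; ring

lemma K_hom (lam Lam c y : ℝ) (hc : 0 < c) : Kplus lam Lam (c * y) = c * Kplus lam Lam y := by
  simp only [Kplus, mul_nonneg_iff_of_pos_left hc]; split_ifs <;> ring

lemma M_hom (lam Lam c y : ℝ) (hc : 0 < c) : Mplus lam Lam (c * y) = c * Mplus lam Lam y := by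
  simp only [Mplus, mul_nonneg_iff_of_pos_left hc]; split_ifs <;> ring

lemma K_ge (lam Lam y : ℝ) (hlL : lam ≤ Lam) :
    Lam * y ≤ Kplus lam Lam y ∧ lam * y ≤ Kplus lam Lam y := by
  unfold Kplus; split_ifs with h
  · constructor <;> nlinarith
  · constructor <;> nlinarith

/-- exponential bound of a primitive -/
lemma int_bound (f : ℝ → ℝ) (hf : Continuous f) (A k : ℝ) (hk : 0 < k) (hA : 0 ≤ A)
    (h : ∀ y, |f y| ≤ A * exp (k * |y|)) (x : ℝ) (hx : 0 ≤ x) :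
    |∫ y in (0:ℝ)..x, f y| ≤ A / k * exp (k * x) := by
  have h1 : |∫ y in (0:ℝ)..x, f y| ≤ ∫ y in (0:ℝ)..x, A * exp (k * y) := by
    rw [← Real.norm_eq_abs]
    apply intervalIntegral.norm_integral_le_of_norm_le hx
    · refine Filter.Eventually.of_forall fun t ht => ?_
      have := h t
      rwa [abs_of_pos ht.1] at this
    · exact Continuous.intervalIntegrable (by fun_prop) _ _
  have h2 : ∫ y in (0:ℝ)..x, A * exp (k * y) = A / k * exp (k * x) - A / k * exp (k * 0) := by
    apply intervalIntegral.integral_eq_sub_of_hasDerivAt (f := fun y => A / k * exp (k * y))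
    · intro y _
      have : HasDerivAt (fun y : ℝ => k * y) k y := by simpa using (hasDerivAt_id y).const_mul k
      have := (this.exp).const_mul (A / k)
      refine this.congr_deriv ?_
      field_simp
    · exact Continuous.intervalIntegrable (by fun_prop) _ _
  have : 0 ≤ A / k * exp (k * 0) := by positivity
  linarith

lemma exists_fix (Φ : ℝ → ℝ → ℝ) (A B β : ℝ) (n : ℕ) (hA : 0 ≤ A) (hB : 0 < B) (hβ : 0 < β)
    (hAn : A < n + 1) (h0 : Φ 0 0 = 0)
    (hΦ : ∀ h1 u1 h2 u2, |Φ h1 u1 - Φ h2 u2| ≤ A * |h1 - h2| + B * |u1 - u2|) :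
    ∃ h : ℝ → ℝ, Continuous h ∧ ∀ x, 0 ≤ x →
      h x = ∫ θ in (0:ℝ)..1, θ ^ n * Φ (h (θ * x)) (1 + 1 / β * ∫ y in (0:ℝ)..(θ * x), h y) := by
  have hΦc : Continuous (fun p : ℝ × ℝ => Φ p.1 p.2) := by
    rw [continuous_iff_continuousAt]
    intro p
    unfold ContinuousAt
    rw [tendsto_iff_norm_sub_tendsto_zero]
    have : Tendsto (fun q : ℝ × ℝ => A * |q.1 - p.1| + B * |q.2 - p.2|) (nhds p) (nhds 0) := by
      have : Continuous (fun q : ℝ × ℝ => A * |q.1 - p.1| + B * |q.2 - p.2|) := by fun_prop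
      simpa using this.tendsto p
    exact squeeze_zero (fun _ => norm_nonneg _) (fun q => hΦ _ _ _ _) this
  obtain ⟨k, hk, hkq⟩ : ∃ k : ℝ, 0 < k ∧ A + B / (k * β) < n + 1 := by
    refine ⟨2 * B / (β * (n + 1 - A)), ?_, ?_⟩
    · have : 0 < (n:ℝ) + 1 - A := by linarith
      positivity
    · have : 0 < (n:ℝ) + 1 - A := by linarith
      have e : B / (2 * B / (β * (n + 1 - A)) * β) = (n + 1 - A) / 2 := by
        field_simp
      rw [e]; linarith
  set q : ℝ := (A + B / (k * β)) / (n + 1) with hq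
  have hq0 : 0 ≤ q := by positivity
  have hq1 : q < 1 := by rw [hq, div_lt_one (by positivity)]; exact hkq
  let H : BoundedContinuousFunction ℝ ℝ → ℝ → ℝ := fun b x => exp (k * |x|) * b x
  have hHc : ∀ b, Continuous (H b) := fun b => by
    have := b.continuous
    fun_prop
  let U : BoundedContinuousFunction ℝ ℝ → ℝ → ℝ := fun b x => 1 + 1 / β * ∫ y in (0:ℝ)..|x|, H b y
  have hUc : ∀ b, Continuous (U b) := fun b => by
    have h1 : Continuous (fun x => ∫ y in (0:ℝ)..x, H b y) :=
      intervalIntegral.continuous_primitive (fun a c => (hHc b).intervalIntegrable a c) 0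
    have h2 : Continuous (fun x : ℝ => ∫ y in (0:ℝ)..|x|, H b y) := h1.comp continuous_abs
    exact continuous_const.add (continuous_const.mul h2)
  have hHb : ∀ b c x, |H b x - H c x| ≤ ‖b - c‖ * exp (k * |x|) := fun b c x => by
    have : H b x - H c x = (b - c) x * exp (k * |x|) := by
      simp only [H, BoundedContinuousFunction.coe_sub, Pi.sub_apply]; ring
    rw [this, abs_mul, abs_of_pos (exp_pos _)]
    exact mul_le_mul_of_nonneg_right ((b - c).norm_coe_le_norm x) (exp_pos _).le
  have hUb : ∀ b c x, |U b x - U c x| ≤ ‖b - c‖ / (k * β) * exp (k * |x|) := fun b c x => by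
    have e : U b x - U c x = 1 / β * ∫ y in (0:ℝ)..|x|, (H b y - H c y) := by
      rw [intervalIntegral.integral_sub ((hHc b).intervalIntegrable _ _)
        ((hHc c).intervalIntegrable _ _)]
      simp only [U]; ring
    have := int_bound (fun y => H b y - H c y) ((hHc b).sub (hHc c)) ‖b - c‖ k hk (norm_nonneg _)
      (hHb b c) |x| (abs_nonneg x)
    rw [e, abs_mul, abs_of_pos (by positivity : 0 < 1 / β)]
    calc _ ≤ 1 / β * (‖b - c‖ / k * exp (k * |x|)) := by gcongr
      _ = _ := by field_simp
  let g : BoundedContinuousFunction ℝ ℝ → ℝ → ℝ := fun b x => Φ (H b x) (U b x)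
  have hgc : ∀ b, Continuous (g b) := fun b => hΦc.comp ((hHc b).prodMk (hUc b))
  have hgb : ∀ b c x, |g b x - g c x| ≤ ((A + B / (k * β)) * ‖b - c‖) * exp (k * |x|) := fun b c x => by
    calc _ ≤ A * |H b x - H c x| + B * |U b x - U c x| := hΦ _ _ _ _
      _ ≤ A * (‖b - c‖ * exp (k * |x|)) + B * (‖b - c‖ / (k * β) * exp (k * |x|)) := by
        gcongr
        · exact hHb b c x
        · exact hUb b c x
      _ = _ := by ring
  let S : (ℝ → ℝ) → ℝ → ℝ := fun f x => exp (-(k * |x|)) * ∫ θ in (0:ℝ)..1, θ ^ n * f (θ * x)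
  have hSc : ∀ f, Continuous f → Continuous (S f) := fun f hf => by
    have : Continuous (fun x => ∫ θ in (0:ℝ)..1, θ ^ n * f (θ * x)) := by
      apply intervalIntegral.continuous_parametric_intervalIntegral_of_continuous'
      simp only [Function.uncurry_def]
      fun_prop
    fun_prop
  have hSb : ∀ f C, 0 ≤ C → (∀ x, |f x| ≤ C * exp (k * |x|)) → ∀ x, |S f x| ≤ C / (n + 1) := by
    intro f C hC hf x
    have h1 : |∫ θ in (0:ℝ)..1, θ ^ n * f (θ * x)| ≤ ∫ θ in (0:ℝ)..1, θ ^ n * (C * exp (k * |x|)) := by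
      rw [← Real.norm_eq_abs]
      apply intervalIntegral.norm_integral_le_of_norm_le zero_le_one
      · refine Filter.Eventually.of_forall fun t ht => ?_
        rw [norm_mul, Real.norm_eq_abs, Real.norm_eq_abs, abs_of_nonneg (pow_nonneg ht.1.le n)]
        apply mul_le_mul_of_nonneg_left _ (pow_nonneg ht.1.le n)
        refine (hf _).trans ?_
        have : |t * x| ≤ |x| := by
          rw [abs_mul, abs_of_pos ht.1]
          exact mul_le_of_le_one_left (abs_nonneg x) ht.2
        gcongr
      · exact Continuous.intervalIntegrable (by fun_prop) _ _
    rw [intervalIntegral.integral_mul_const, integral_pow] at h1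
    simp only [S]
    rw [abs_mul, abs_of_pos (exp_pos _)]
    calc _ ≤ exp (-(k * |x|)) * ((1 ^ (n + 1) - 0 ^ (n + 1)) / (↑n + 1) * (C * exp (k * |x|))) := by gcongr
      _ = (exp (-(k * |x|)) * exp (k * |x|)) * (C / (n + 1)) := by simp; ring
      _ = _ := by rw [← exp_add]; simp
  have hg0 : ∀ b x, |g b x| ≤ (A * ‖b‖ + B * (1 + ‖b‖ / (k * β))) * exp (k * |x|) := fun b x => by
    have e1 : H 0 x = 0 := by simp [H]
    have e2 : U 0 x = 1 := by simp [U, H]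
    have h1 := hHb b 0 x
    have h2 := hUb b 0 x
    rw [e1, sub_zero, sub_zero] at h1
    rw [e2, sub_zero] at h2
    have h3 : |U b x| ≤ |U b x - 1| + 1 := by
      have := abs_add_le (U b x - 1) 1
      simpa using this
    have h4 := hΦ (H b x) (U b x) 0 0
    rw [h0, sub_zero, sub_zero, sub_zero] at h4
    have h5 : 1 ≤ exp (k * |x|) := one_le_exp (by positivity)
    calc _ ≤ _ := h4
      _ ≤ A * (‖b‖ * exp (k * |x|)) + B * (‖b‖ / (k * β) * exp (k * |x|) + exp (k * |x|)) := by
        gcongr; linarith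
      _ = _ := by ring
  let T : BoundedContinuousFunction ℝ ℝ → BoundedContinuousFunction ℝ ℝ := fun b =>
    BoundedContinuousFunction.ofNormedAddCommGroup (S (g b)) (hSc _ (hgc b))
      ((A * ‖b‖ + B * (1 + ‖b‖ / (k * β))) / (n + 1))
      (fun x => hSb (g b) _ (by positivity) (hg0 b) x)
  have hT : ContractingWith ⟨q, hq0⟩ T := by
    refine ⟨by exact_mod_cast hq1, LipschitzWith.of_dist_le_mul fun b c => ?_⟩
    rw [dist_eq_norm, dist_eq_norm]
    rw [BoundedContinuousFunction.norm_le (by positivity)]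
    intro x
    have hi : ∀ b : BoundedContinuousFunction ℝ ℝ,
        IntervalIntegrable (fun θ : ℝ => θ ^ n * g b (θ * x)) volume 0 1 := fun b => by
      have := hgc b
      exact Continuous.intervalIntegrable (by fun_prop) _ _
    have e : (T b - T c) x = S (fun y => g b y - g c y) x := by
      simp only [BoundedContinuousFunction.coe_sub, Pi.sub_apply, T,
        BoundedContinuousFunction.coe_ofNormedAddCommGroup, S, mul_sub]
      rw [intervalIntegral.integral_sub (hi b) (hi c)]; ring
    rw [e, Real.norm_eq_abs]
    refine (hSb _ _ (by positivity) (hgb b c) x).trans (le_of_eq ?_)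
    change _ = q * ‖b - c‖
    rw [hq]; ring
  set b := hT.fixedPoint T with hb
  have hfix : T b = b := hT.fixedPoint_isFixedPt
  refine ⟨H b, hHc b, fun x hx => ?_⟩
  have e1 : b x = S (g b) x := by
    conv_lhs => rw [← hfix]
    rfl
  have e2 : H b x = ∫ θ in (0:ℝ)..1, θ ^ n * g b (θ * x) := by
    simp only [H]
    rw [e1]
    simp only [S]
    rw [← mul_assoc, ← exp_add]; simp
  rw [e2]
  apply intervalIntegral.integral_congr
  intro θ hθ
  rw [uIcc_of_le zero_le_one] at hθ
  simp only [g, U]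
  rw [abs_of_nonneg (mul_nonneg hθ.1 hx)]

lemma fix_deriv (Φ : ℝ → ℝ → ℝ) (hΦc : Continuous (fun p : ℝ × ℝ => Φ p.1 p.2)) (n : ℕ)
    (h u : ℝ → ℝ) (hh : Continuous h) (hu : Continuous u)
    (hfix : ∀ x, 0 ≤ x → h x = ∫ θ in (0:ℝ)..1, θ ^ n * Φ (h (θ * x)) (u (θ * x)))
    (x : ℝ) (hx : 0 < x) :
    HasDerivAt h ((Φ (h x) (u x) - (n + 1) * h x) / x) x := by
  have hc : Continuous (fun y => y ^ n * Φ (h y) (u y)) :=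
    (continuous_pow n).mul (hΦc.comp (hh.prodMk hu))
  have key : ∀ y, 0 < y → h y = (y ^ (n + 1))⁻¹ * ∫ z in (0:ℝ)..y, z ^ n * Φ (h z) (u z) := by
    intro y hy
    have e := intervalIntegral.integral_comp_mul_right (a := 0) (b := 1)
      (fun z => z ^ n * Φ (h z) (u z)) hy.ne'
    simp only [zero_mul, one_mul, smul_eq_mul, mul_pow] at e
    have e2 : ∫ θ in (0:ℝ)..1, θ ^ n * y ^ n * Φ (h (θ * y)) (u (θ * y))
        = y ^ n * ∫ θ in (0:ℝ)..1, θ ^ n * Φ (h (θ * y)) (u (θ * y)) := by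
      rw [← intervalIntegral.integral_const_mul]
      congr 1; ext θ; ring
    rw [e2, ← hfix y hy.le] at e
    rw [pow_succ, mul_inv, mul_assoc, ← e]
    field_simp
  have hI : HasDerivAt (fun y => ∫ z in (0:ℝ)..y, z ^ n * Φ (h z) (u z))
      (x ^ n * Φ (h x) (u x)) x :=
    intervalIntegral.integral_hasDerivAt_right (hc.intervalIntegrable _ _)
      hc.stronglyMeasurable.stronglyMeasurableAtFilter hc.continuousAt
  have hp : HasDerivAt (fun y : ℝ => (y ^ (n + 1))⁻¹) (-(((n + 1 : ℕ) : ℝ) * x ^ n) / (x ^ (n + 1)) ^ 2) x := by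
    have := (hasDerivAt_pow (n + 1) x).fun_inv (pow_ne_zero _ hx.ne')
    simpa using this
  have hd := hp.mul hI
  have hev : h =ᶠ[nhds x] (fun y : ℝ => (y ^ (n + 1))⁻¹) * (fun y => ∫ z in (0:ℝ)..y, z ^ n * Φ (h z) (u z)) := by
    filter_upwards [lt_mem_nhds hx] with y hy
    exact key y hy
  refine (hd.congr_of_eventuallyEq hev).congr_deriv ?_
  have hk := key x hx
  have : ∫ z in (0:ℝ)..x, z ^ n * Φ (h z) (u z) = x ^ (n + 1) * h x := by
    rw [hk]; field_simp
  rw [this]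
  push_cast
  field_simp
  ring

lemma pos_of_no_zero (u : ℝ → ℝ) (hu : Continuous u) (u0 : u 0 = 1) (R : ℝ)
    (hn : ∀ x, 0 < x → x < R → u x ≠ 0) (x : ℝ) (hx : 0 ≤ x) (hxR : x < R) : 0 < u x := by
  by_contra hneg
  push Not at hneg
  have := intermediate_value_Icc' hx hu.continuousOn
  obtain ⟨y, hy, hy0⟩ := this (show (0:ℝ) ∈ Icc (u x) (u 0) from ⟨hneg, by rw [u0]; norm_num⟩)
  rcases hy.1.eq_or_lt with h | h
  · rw [← h, u0] at hy0; norm_num at hy0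
  · exact hn y h (hy.2.trans_lt hxR) hy0

lemma zero_aux (h u d : ℝ → ℝ) (β m C : ℝ) (hβ : 0 < β) (hm : 1 < m) (hC : 0 < C)
    (hh : Continuous h) (hu : Continuous u) (u0 : u 0 = 1)
    (hu' : ∀ x, 0 < x → HasDerivAt u (h x / β) x)
    (hh' : ∀ x, 0 < x → HasDerivAt h (d x) x)
    (hd : ∀ x, 0 < x → x * d x ≤ -m * h x - C * u x) : ∃ x, 0 < x ∧ u x = 0 := by
  by_contra hno
  push Not at hno
  have hpos : ∀ x, 0 ≤ x → 0 < u x := fun x hx =>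
    pos_of_no_zero u hu u0 (x + 1) (fun y hy _ => hno y hy) x hx (by linarith)
  have hm0 : 0 < m := by linarith
  have hrp : Continuous (fun x : ℝ => x ^ m) := Real.continuous_rpow_const hm0.le
  -- derivative of x ^ m * (h + c)
  have hw : ∀ c x, 0 < x → HasDerivAt (fun y : ℝ => y ^ m * (h y + c))
      (x ^ (m - 1) * (m * (h x + c) + x * d x)) x := by
    intro c x hx
    have h1 := (Real.hasDerivAt_rpow_const (p := m) (Or.inl hx.ne')).mul ((hh' x hx).add_const c)
    refine h1.congr_deriv ?_
    have : x ^ m = x ^ (m - 1) * x := by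
      rw [← Real.rpow_add_one hx.ne']; congr 1; ring
    rw [this]; ring
  have hanti : StrictAntiOn (fun y : ℝ => y ^ m * (h y + 0)) (Ici 0) := by
    apply strictAntiOn_of_deriv_neg (convex_Ici 0)
    · exact (hrp.mul (hh.add continuous_const)).continuousOn
    · intro x hx
      rw [interior_Ici] at hx
      rw [(hw 0 x hx).deriv]
      have h1 := hd x hx
      have h2 := hpos x (le_of_lt hx)
      have h3 : 0 < x ^ (m - 1) := Real.rpow_pos_of_pos hx _
      apply mul_neg_of_pos_of_neg h3
      nlinarith
  have hneg : ∀ x, 0 < x → h x < 0 := by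
    intro x hx
    have := hanti (mem_Ici.2 le_rfl) (mem_Ici.2 hx.le) hx
    simp only [add_zero, Real.zero_rpow hm0.ne', zero_mul] at this
    have h3 : 0 < x ^ m := Real.rpow_pos_of_pos hx _
    by_contra hc
    push Not at hc
    nlinarith [mul_nonneg h3.le hc]
  have hua : AntitoneOn u (Ici 0) := by
    apply antitoneOn_of_deriv_nonpos (convex_Ici 0) hu.continuousOn
    · intro x hx
      rw [interior_Ici] at hx
      exact (hu' x hx).differentiableAt.differentiableWithinAt
    · intro x hx
      rw [interior_Ici] at hx
      rw [(hu' x hx).deriv]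
      exact div_nonpos_of_nonpos_of_nonneg (hneg x hx).le hβ.le
  have hle : ∀ X, 0 < X → h X ≤ -(C / m) * u X := by
    intro X hX
    have ha : AntitoneOn (fun y : ℝ => y ^ m * (h y + C / m * u X)) (Icc 0 X) := by
      apply antitoneOn_of_deriv_nonpos (convex_Icc 0 X)
      · exact (hrp.mul (hh.add continuous_const)).continuousOn
      · intro x hx
        rw [interior_Icc] at hx
        exact (hw _ x hx.1).differentiableAt.differentiableWithinAt
      · intro x hx
        rw [interior_Icc] at hx
        rw [(hw _ x hx.1).deriv]
        have h1 := hd x hx.1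
        have h2 : u X ≤ u x := hua (mem_Ici.2 hx.1.le) (mem_Ici.2 hX.le) hx.2.le
        have h3 : 0 < x ^ (m - 1) := Real.rpow_pos_of_pos hx.1 _
        apply mul_nonpos_of_nonneg_of_nonpos h3.le
        have : m * (h x + C / m * u X) = m * h x + C * u X := by field_simp
        rw [this]
        nlinarith
    have := ha (left_mem_Icc.2 hX.le) (right_mem_Icc.2 hX.le) hX.le
    simp only [Real.zero_rpow hm0.ne', zero_mul] at this
    have h3 : 0 < X ^ m := Real.rpow_pos_of_pos hX _
    by_contra hc
    push Not at hc
    have : 0 < X ^ m * (h X + C / m * u X) := mul_pos h3 (by linarith)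
    linarith
  set c := C / m / β with hc
  have hcpos : 0 < c := by positivity
  -- exponential decay
  have hexp : ∀ x, 0 ≤ x → u x ≤ exp (-(c * x)) := by
    intro x hx
    have ha : AntitoneOn (fun y : ℝ => u y * exp (c * y)) (Ici 0) := by
      have hD : ∀ y, 0 < y → HasDerivAt (fun y : ℝ => u y * exp (c * y))
          (h y / β * exp (c * y) + u y * (exp (c * y) * c)) y := by
        intro y hy
        have : HasDerivAt (fun y : ℝ => c * y) c y := by simpa using (hasDerivAt_id y).const_mul c
        exact (hu' y hy).mul this.exp
      apply antitoneOn_of_deriv_nonpos (convex_Ici 0)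
      · exact Continuous.continuousOn (by fun_prop)
      · intro y hy
        rw [interior_Ici] at hy
        exact (hD y hy).differentiableAt.differentiableWithinAt
      · intro y hy
        rw [interior_Ici] at hy
        rw [(hD y hy).deriv]
        have h1 : h y / β ≤ -c * u y := by
          rw [div_le_iff₀ hβ, hc]
          have := hle y hy
          calc _ ≤ _ := this
            _ = _ := by field_simp
        nlinarith [exp_pos (c * y)]
    have := ha (mem_Ici.2 le_rfl) (mem_Ici.2 hx) hx
    simp only [u0, mul_zero, exp_zero, mul_one] at this
    rw [exp_neg, ← one_div, le_div_iff₀ (exp_pos _)]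
    exact this
  -- polynomial lower bound
  have hδ : 0 < -h 1 := by linarith [hneg 1 one_pos]
  have hlow : ∀ x, 1 ≤ x → (-h 1) / β * x * (2 * x) ^ (-m) ≤ u x := by
    intro x hx
    have hx0 : 0 < x := by linarith
    obtain ⟨ξ, hξ, he⟩ := exists_hasDerivAt_eq_slope u (fun y => h y / β) (show x < 2 * x by linarith)
      hu.continuousOn (fun y hy => hu' y (by linarith [hy.1]))
    have hξ1 : 1 ≤ ξ := by linarith [hξ.1]
    have hξ0 : 0 < ξ := by linarith
    have h1 : ξ ^ m * (h ξ + 0) ≤ 1 ^ m * (h 1 + 0) :=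
      hanti.antitoneOn (mem_Ici.2 zero_le_one) (mem_Ici.2 hξ0.le) hξ1
    rw [Real.one_rpow, one_mul, add_zero, add_zero] at h1
    have h2 : ξ ^ m ≤ (2 * x) ^ m := Real.rpow_le_rpow hξ0.le hξ.2.le hm0.le
    have h3 : (2 * x) ^ m * h ξ ≤ h 1 := by nlinarith [hneg ξ hξ0]
    have h4 : 0 < (2 * x) ^ m := Real.rpow_pos_of_pos (by linarith) _
    have h5 : h ξ ≤ h 1 * (2 * x) ^ (-m) := by
      rw [Real.rpow_neg (by linarith), ← div_eq_mul_inv, le_div_iff₀ h4]; linarith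
    have h6 : u (2 * x) - u x = h ξ / β * x := by
      rw [he]; field_simp; ring
    have h7 := hpos (2 * x) (by linarith)
    have h8 : h ξ / β * x ≤ h 1 * (2 * x) ^ (-m) / β * x := by gcongr
    have h9 : (-h 1) / β * x * (2 * x) ^ (-m) = -(h 1 * (2 * x) ^ (-m) / β * x) := by ring
    rw [h9]; linarith
  have ht := tendsto_rpow_mul_exp_neg_mul_atTop_nhds_zero (m - 1) c hcpos
  have hpos2 : 0 < (-h 1) / β * 2 ^ (-m) := by
    have : (0:ℝ) < 2 ^ (-m) := Real.rpow_pos_of_pos two_pos _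
    positivity
  obtain ⟨x, hx1, hx2⟩ := ((ht.eventually (gt_mem_nhds hpos2)).and (eventually_ge_atTop 1)).exists
  have hx0 : 0 < x := by linarith
  have e1 := (hlow x hx2).trans (hexp x hx0.le)
  have e2 : (-h 1) / β * x * (2 * x) ^ (-m) * x ^ (m - 1) = (-h 1) / β * 2 ^ (-m) := by
    rw [Real.mul_rpow two_pos.le hx0.le]
    have : x * x ^ (-m) * x ^ (m - 1) = 1 := by
      have h1 : x ^ (1 + -m + (m - 1)) = x ^ (1:ℝ) * x ^ (-m) * x ^ (m - 1) := by
        rw [Real.rpow_add hx0, Real.rpow_add hx0]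
      rw [Real.rpow_one] at h1
      rw [← h1, show 1 + -m + (m - 1) = 0 by ring, Real.rpow_zero]
    calc _ = (-h 1) / β * 2 ^ (-m) * (x * x ^ (-m) * x ^ (m - 1)) := by ring
      _ = _ := by rw [this, mul_one]
  have h3 : 0 < x ^ (m - 1) := Real.rpow_pos_of_pos hx0 _
  have e3 := mul_le_mul_of_nonneg_right e1 h3.le
  rw [e2] at e3
  have : exp (-(c * x)) * x ^ (m - 1) = x ^ (m - 1) * exp (-c * x) := by
    rw [neg_mul]; ring
  linarith

lemma first_zero (u : ℝ → ℝ) (hu : Continuous u) (u0 : u 0 = 1) (hz : ∃ x, 0 < x ∧ u x = 0) :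
    ∃ x, 0 < x ∧ u x = 0 ∧ ∀ y, 0 < y → y < x → 0 < u y := by
  obtain ⟨X, hX, hX0⟩ := hz
  have hcomp : IsCompact (Icc 0 X ∩ u ⁻¹' {0}) :=
    isCompact_Icc.inter_right (isClosed_singleton.preimage hu)
  obtain ⟨x, ⟨hx, hx0⟩, hmin⟩ := hcomp.exists_isLeast ⟨X, ⟨hX.le, le_rfl⟩, hX0⟩
  have hx0' : u x = 0 := hx0
  refine ⟨x, ?_, hx0', fun y hy hyx => ?_⟩
  · rcases hx.1.eq_or_lt with h | h
    · rw [← h, u0] at hx0'; norm_num at hx0'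
    · exact h
  · apply pos_of_no_zero u hu u0 x _ y hy.le hyx
    intro z hz hzx hz0
    have := hmin ⟨⟨hz.le, hzx.le.trans hx.2⟩, hz0⟩
    linarith

lemma M_cont (lam Lam : ℝ) : Continuous (Mplus lam Lam) := by
  unfold Mplus
  apply Continuous.if_le (by fun_prop) (by fun_prop) continuous_const continuous_id
  intro x hx
  have hx0 : x = 0 := hx.symm
  simp [hx0]

lemma K_cont (lam Lam : ℝ) : Continuous (Kplus lam Lam) := by
  unfold Kplus
  apply Continuous.if_le (by fun_prop) (by fun_prop) continuous_const continuous_id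
  intro x hx
  have hx0 : x = 0 := hx.symm
  simp [hx0]

/-- The regularized system in the variable `x = r ^ β`. -/
lemma system_exists (n1 lam Lam β : ℝ) (hn1 : 0 < n1) (hlam : 0 < lam) (hlL : lam ≤ Lam)
    (hNp : 1 < lam / Lam * n1) (hβ : 0 < β) :
    ∃ h u : ℝ → ℝ, Continuous h ∧ Continuous u ∧ u 0 = 1 ∧
      (∀ x, HasDerivAt u (h x / β) x) ∧
      (∀ x, 0 < x → HasDerivAt h
        (((h x + Mplus lam Lam (-n1 * Kplus lam Lam (h x) - u x)) / β - h x) / x) x) := by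
  have hLam : 0 < Lam := by linarith
  obtain ⟨n, hn⟩ := exists_nat_ge (Lam / lam * n1 / β)
  let Φ : ℝ → ℝ → ℝ := fun h u => n * h + (h + Mplus lam Lam (-n1 * Kplus lam Lam h - u)) / β
  have hΦc : Continuous (fun p : ℝ × ℝ => Φ p.1 p.2) := by
    have h1 := M_cont lam Lam
    have h2 := K_cont lam Lam
    simp only [Φ]
    fun_prop
  have hrat : lam / Lam ≤ Lam / lam := by
    rw [div_le_div_iff₀ hLam hlam]; nlinarith
  have hlip : ∀ h1 u1 h2 u2, |Φ h1 u1 - Φ h2 u2| ≤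
      (n - (lam / Lam * n1 - 1) / β) * |h1 - h2| + 1 / (lam * β) * |u1 - u2| := by
    intro h1 u1 h2 u2
    obtain ⟨v, hv1, hv2, hv⟩ := K_slope lam Lam h1 h2 hlL
    obtain ⟨w, hw1, hw2, hw⟩ := M_slope lam Lam (-n1 * Kplus lam Lam h1 - u1)
      (-n1 * Kplus lam Lam h2 - u2) hlam hlL
    have hw0 : 0 < w := lt_of_lt_of_le (by positivity) hw1
    have hv0 : 0 < v := by linarith
    have e : Φ h1 u1 - Φ h2 u2 =
        (n - (w * v * n1 - 1) / β) * (h1 - h2) + -(w / β) * (u1 - u2) := by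
      have e1 : -n1 * Kplus lam Lam h1 - u1 - (-n1 * Kplus lam Lam h2 - u2)
          = -n1 * (v * (h1 - h2)) - (u1 - u2) := by rw [← hv]; ring
      rw [e1] at hw
      calc Φ h1 u1 - Φ h2 u2 = n * (h1 - h2) + ((h1 - h2) +
            (Mplus lam Lam (-n1 * Kplus lam Lam h1 - u1)
              - Mplus lam Lam (-n1 * Kplus lam Lam h2 - u2))) / β := by simp only [Φ]; ring
        _ = _ := by rw [hw]; ring
    have hwv1 : lam / Lam ≤ w * v := by
      calc lam / Lam = 1 / Lam * lam := by ring
        _ ≤ w * v := by gcongr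
    have hwv2 : w * v ≤ Lam / lam := by
      calc w * v ≤ 1 / lam * Lam := by gcongr
        _ = _ := by ring
    have hc0 : 0 ≤ n - (w * v * n1 - 1) / β := by
      have : (w * v * n1 - 1) / β ≤ Lam / lam * n1 / β := by
        gcongr
        nlinarith
      linarith
    have hc1 : n - (w * v * n1 - 1) / β ≤ n - (lam / Lam * n1 - 1) / β := by
      gcongr
    rw [e]
    refine (abs_add_le _ _).trans ?_
    rw [abs_mul, abs_mul, abs_neg, abs_of_nonneg hc0, abs_of_pos (by positivity : 0 < w / β)]
    have : w / β ≤ 1 / (lam * β) := by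
      rw [← div_div]; gcongr
    gcongr
  have hκ : 0 < (lam / Lam * n1 - 1) / β := div_pos (by linarith) hβ
  obtain ⟨h, hh, hfix⟩ := exists_fix Φ (n - (lam / Lam * n1 - 1) / β) (1 / (lam * β)) β n
    (by
      have : (lam / Lam * n1 - 1) / β ≤ Lam / lam * n1 / β := by
        gcongr
        nlinarith
      linarith) (by positivity) hβ (by linarith)
    (by simp [Φ, Kplus, Mplus]) hlip
  have hud : ∀ x, HasDerivAt (fun x => 1 + 1 / β * ∫ y in (0:ℝ)..x, h y) (h x / β) x := by
    intro x
    have hI : HasDerivAt (fun y => ∫ z in (0:ℝ)..y, h z) (h x) x :=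
      intervalIntegral.integral_hasDerivAt_right (hh.intervalIntegrable _ _)
        hh.stronglyMeasurable.stronglyMeasurableAtFilter hh.continuousAt
    refine ((hI.const_mul (1 / β)).const_add 1).congr_deriv ?_
    ring
  have huc : Continuous (fun x => 1 + 1 / β * ∫ y in (0:ℝ)..x, h y) :=
    continuous_iff_continuousAt.2 fun x => (hud x).continuousAt
  refine ⟨h, fun x => 1 + 1 / β * ∫ y in (0:ℝ)..x, h y, hh, huc, by simp, hud, fun x hx => ?_⟩
  refine (fix_deriv Φ hΦc n h _ hh huc hfix x hx).congr_deriv ?_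
  simp only [Φ]
  ring

theorem stmt16 (N : ℕ) (hN : 2 ≤ N) (lam Lam : ℝ) (hlam : 0 < lam) (hlL : lam ≤ Lam)
    (hNp : 2 < lam / Lam * ((N : ℝ) - 1) + 1)
    (γ : ℝ) (hγ0 : 0 < γ) (hγ2 : γ < 2) :
    ∃ u : ℝ → ℝ, ContDiffOn ℝ 2 u (Ioi 0) ∧
      (∀ r ∈ Ioi (0:ℝ),
        deriv (deriv u) r =
          Mplus lam Lam (-(((N : ℝ) - 1) / r) * Kplus lam Lam (deriv u r)
            - u r * r ^ (-γ))) ∧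
      (∀ r ∈ Ioi (0:ℝ), pucciP lam Lam N u r + u r * r ^ (-γ) = 0) ∧
      Tendsto u (nhdsWithin 0 (Ioi 0)) (nhds 1) ∧
      ∃ rbar : ℝ, 0 < rbar ∧ u rbar = 0 ∧ ∀ r ∈ Ioo 0 rbar, 0 < u r := by
  have hN2 : (2:ℝ) ≤ N := by exact_mod_cast hN
  set n1 : ℝ := (N : ℝ) - 1 with hn1def
  have hn1 : 0 < n1 := by linarith
  have hLam : 0 < Lam := by linarith
  set β : ℝ := 2 - γ with hβdef
  have hβ : 0 < β := by linarith
  obtain ⟨h, u, hh, hu, u0, hu', hh'⟩ :=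
    system_exists n1 lam Lam β hn1 hlam hlL (by linarith) hβ
  -- the solution in the variable r
  let G : ℝ → ℝ := fun x => Mplus lam Lam (-n1 * Kplus lam Lam (h x) - u x)
  have hGc : Continuous G := by
    have h1 := M_cont lam Lam
    have h2 := K_cont lam Lam
    fun_prop
  have hpow : ∀ r : ℝ, 0 < r → HasDerivAt (fun s : ℝ => s ^ β) (β * r ^ (β - 1)) r :=
    fun r hr => Real.hasDerivAt_rpow_const (Or.inl hr.ne')
  have hD1 : ∀ r : ℝ, 0 < r → HasDerivAt (fun s : ℝ => u (s ^ β)) (h (r ^ β) * r ^ (β - 1)) r := by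
    intro r hr
    refine ((hu' (r ^ β)).comp r (hpow r hr)).congr_deriv ?_
    field_simp
  have hD2 : ∀ r : ℝ, 0 < r → HasDerivAt (fun s : ℝ => h (s ^ β) * s ^ (β - 1))
      (r ^ (-γ) * G (r ^ β)) r := by
    intro r hr
    have hx : 0 < r ^ β := Real.rpow_pos_of_pos hr _
    have h1 := ((hh' (r ^ β) hx).comp r (hpow r hr)).mul
      (Real.hasDerivAt_rpow_const (p := β - 1) (Or.inl hr.ne'))
    refine h1.congr_deriv ?_
    have hg : 0 < r ^ (-γ) := Real.rpow_pos_of_pos hr _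
    have e1 : r ^ (β - 1) = r ^ (-γ) * r := by
      rw [← Real.rpow_add_one hr.ne']; congr 1; rw [hβdef]; ring
    have e2 : r ^ β = r ^ (-γ) * r * r := by
      rw [← e1, ← Real.rpow_add_one hr.ne']; congr 1; ring
    have e3 : r ^ (β - 1 - 1) = r ^ (-γ) := by
      congr 1; rw [hβdef]; ring
    change ((h (r ^ β) + G (r ^ β)) / β - h (r ^ β)) / (r ^ β) * (β * r ^ (β - 1)) * r ^ (β - 1)
      + h (r ^ β) * ((β - 1) * r ^ (β - 1 - 1)) = r ^ (-γ) * G (r ^ β)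
    generalize h (r ^ β) = a
    generalize G (r ^ β) = b
    rw [e3, e1, e2]
    field_simp
    ring
  have hd1 : ∀ r : ℝ, 0 < r → deriv (fun s : ℝ => u (s ^ β)) r = h (r ^ β) * r ^ (β - 1) :=
    fun r hr => (hD1 r hr).deriv
  have hev : ∀ r : ℝ, 0 < r → deriv (fun s : ℝ => u (s ^ β)) =ᶠ[nhds r]
      (fun s : ℝ => h (s ^ β) * s ^ (β - 1)) := fun r hr => by
    filter_upwards [lt_mem_nhds hr] with s hs using hd1 s hs
  have hDD : ∀ r : ℝ, 0 < r → HasDerivAt (deriv (fun s : ℝ => u (s ^ β)))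
      (r ^ (-γ) * G (r ^ β)) r := fun r hr => (hD2 r hr).congr_of_eventuallyEq (hev r hr)
  have hode : ∀ r ∈ Ioi (0:ℝ), deriv (deriv (fun s : ℝ => u (s ^ β))) r =
      Mplus lam Lam (-(n1 / r) * Kplus lam Lam (deriv (fun s : ℝ => u (s ^ β)) r)
        - u (r ^ β) * r ^ (-γ)) := by
    intro r hr
    have hr : 0 < r := hr
    have hg : 0 < r ^ (-γ) := Real.rpow_pos_of_pos hr _
    have e1 : r ^ (β - 1) = r ^ (-γ) * r := by
      rw [← Real.rpow_add_one hr.ne']; congr 1; rw [hβdef]; ring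
    rw [(hDD r hr).deriv, hd1 r hr, e1, mul_comm (h (r ^ β)), K_hom _ _ _ _ (mul_pos hg hr),
      ← M_hom _ _ _ _ hg]
    congr 1
    field_simp
  refine ⟨fun r => u (r ^ β), ?_, hode, ?_, ?_, ?_⟩
  · have h2 : (2 : WithTop ℕ∞) = 1 + 1 := by norm_num
    rw [h2, contDiffOn_succ_iff_deriv_of_isOpen isOpen_Ioi]
    refine ⟨fun r hr => (hD1 r hr).differentiableAt.differentiableWithinAt, by simp, ?_⟩
    have h1 : (1 : WithTop ℕ∞) = 0 + 1 := by norm_num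
    rw [h1, contDiffOn_succ_iff_deriv_of_isOpen isOpen_Ioi]
    refine ⟨fun r hr => (hDD r hr).differentiableAt.differentiableWithinAt, by simp, ?_⟩
    rw [contDiffOn_zero]
    have hc : ContinuousOn (fun r : ℝ => r ^ (-γ) * G (r ^ β)) (Ioi 0) := by
      apply ContinuousOn.mul
      · exact fun r hr => (Real.continuousAt_rpow_const r _ (Or.inl (ne_of_gt hr))).continuousWithinAt
      · exact (hGc.comp (Real.continuous_rpow_const hβ.le)).continuousOn
    exact hc.congr fun r hr => (hDD r hr).deriv
  · intro r hr
    have hr' : 0 < r := hr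
    have ho := hode r hr
    unfold pucciP
    rw [K_eq_max, K_eq_max, ho, K_M _ _ _ hlam hlL,
      div_eq_inv_mul (deriv (fun s : ℝ => u (s ^ β)) r) r, K_hom _ _ _ _ (inv_pos.2 hr')]
    ring
  · have hc : Continuous (fun r : ℝ => u (r ^ β)) := hu.comp (Real.continuous_rpow_const hβ.le)
    have := hc.tendsto 0
    simp only [Real.zero_rpow hβ.ne', u0] at this
    exact this.mono_left nhdsWithin_le_nhds
  · have hz := zero_aux h u _ β ((lam / Lam * n1 - 1) / β + 1) (1 / (Lam * β)) hβ
      (by have : 0 < (lam / Lam * n1 - 1) / β := div_pos (by linarith) hβ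
          linarith) (by positivity) hh hu u0 (fun x _ => hu' x) hh'
      (by
        intro x hx
        have hK := K_M lam Lam (-n1 * Kplus lam Lam (h x) - u x) hlam hlL
        have k1 := (K_ge lam Lam (Mplus lam Lam (-n1 * Kplus lam Lam (h x) - u x)) hlL).1
        have k2 := (K_ge lam Lam (h x) hlL).2
        rw [hK] at k1
        generalize Mplus lam Lam (-n1 * Kplus lam Lam (h x) - u x) = s at k1 ⊢
        have k3 : Lam * s ≤ -n1 * (lam * h x) - u x := by nlinarith
        have k4 : s ≤ (-n1 * (lam * h x) - u x) / Lam := by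
          rw [le_div_iff₀ hLam]; linarith
        calc x * (((h x + s) / β - h x) / x) = (h x + s) / β - h x := by field_simp
          _ ≤ (h x + (-n1 * (lam * h x) - u x) / Lam) / β - h x := by gcongr
          _ = _ := by field_simp; ring)
    obtain ⟨x, hx, hx0, hxp⟩ := first_zero u hu u0 hz
    refine ⟨x ^ β⁻¹, Real.rpow_pos_of_pos hx _, ?_, fun r hr => ?_⟩
    · simp only [← Real.rpow_mul hx.le, inv_mul_cancel₀ hβ.ne', Real.rpow_one, hx0]
    · apply hxp _ (Real.rpow_pos_of_pos hr.1 _)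
      have := Real.rpow_lt_rpow hr.1.le hr.2 hβ
      rwa [← Real.rpow_mul hx.le, inv_mul_cancel₀ hβ.ne', Real.rpow_one] at this

end
end

section
/- Stability with eigenfunction convergence: let 0 < γ < 2 and for ε > 0 set μ_ε := λ̄^ε_γ(F) := sup{μ ∈ ℝ : there exists u continuous on [0,1), C² on (0,1), with u > 0 on [0,1) and F(D(u''(r), u'(r)/r)) + μ·u(r)·(r²+ε²)^{−γ/2} ≤ 0 for all r ∈ (0,1)}. Suppose that for each ε ∈ (0,1] there is a function u_ε, continuous on [0,1], C² on [0,1) with u_ε'(0) = 0, u_ε > 0 on [0,1), u_ε(0) = 1, u_ε(1) = 0, solving F(D(u_ε''(r), u_ε'(r)/r)) + μ_ε·u_ε(r)·(r²+ε²)^{−γ/2} = 0 on (0,1). Then lim_{ε→0⁺} μ_ε = λ̄'_γ(F), and there exist a sequence ε_n → 0⁺ and a function u, continuous on [0,1] and C² on (0,1), with u(0) = 1, u > 0 on [0,1), u(1) = 0, satisfying F(D(u''(r), u'(r)/r)) + λ̄'_γ(F)·u(r)·r^{−γ} = 0 on (0,1), such that u_{ε_n} converges to u uniformly on [0,1]. 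-/
open Set Real Filter MeasureTheory Matrix

noncomputable section

/-- The regularized eigenvalue `λ̄^ε_γ(F)`, where the singular potential `r^{-γ}` is
replaced by `(r² + ε²)^{-γ/2}`. -/
def epsEV (N : ℕ) (F : Matrix (Fin N) (Fin N) ℝ → ℝ) (γ ε : ℝ) : ℝ :=
  sSup {μ : ℝ | ∃ u : ℝ → ℝ, ContinuousOn u (Ico 0 1) ∧ ContDiffOn ℝ 2 u (Ioo 0 1) ∧
    (∀ r ∈ Ico (0:ℝ) 1, 0 < u r) ∧
    (∀ r ∈ Ioo (0:ℝ) 1,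
      F (Dmat N (deriv (deriv u) r) (deriv u r / r))
        + μ * u r * (r ^ 2 + ε ^ 2) ^ (-(γ / 2)) ≤ 0)}

/-- Abstract properties of the reduced operator `G(a,b) = F(D(a,b))`. -/
structure GP (G : ℝ → ℝ → ℝ) (l L n : ℝ) : Prop where
  l0 : 0 < l
  lL : l ≤ L
  hk : 1 < l / L * n
  h1 : ∀ a b s, 0 ≤ s → l * s ≤ G (a + s) b - G a b ∧ G (a + s) b - G a b ≤ L * s
  h2 : ∀ a b s, 0 ≤ s → l * n * s ≤ G a (b + s) - G a b ∧ G a (b + s) - G a b ≤ L * n * s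
  h3 : ∀ t a b, 0 < t → G (t * a) (t * b) = t * G a b

lemma gp_of_F (N : ℕ) (hN : 2 ≤ N) (lam Lam : ℝ) (hlam : 0 < lam) (hlL : lam ≤ Lam)
    (hNp : 2 < lam / Lam * ((N : ℝ) - 1) + 1)
    (F : Matrix (Fin N) (Fin N) ℝ → ℝ)
    (hF1 : UnifElliptic N lam Lam F) (hF3 : PosHomog N F) :
    GP (fun a b => F (Dmat N a b)) lam Lam ((N : ℝ) - 1) := by
  have hadd : ∀ a b a' b', Dmat N a b + Dmat N a' b' = Dmat N (a + a') (b + b') := by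
    intro a b a' b'
    unfold Dmat
    rw [Matrix.diagonal_add]
    congr 1
    ext i
    split_ifs <;> rfl
  have hsymm : ∀ a b, (Dmat N a b).IsSymm := by
    intro a b
    unfold Dmat
    exact Matrix.isSymm_diagonal _
  have hpos : ∀ a b, 0 ≤ a → 0 ≤ b → (Dmat N a b).PosSemidef := by
    intro a b ha hb
    unfold Dmat
    apply Matrix.PosSemidef.diagonal
    intro i
    simp only [Pi.zero_apply]
    split_ifs <;> assumption
  have htr : ∀ a b, (Dmat N a b).trace = a + ((N : ℝ) - 1) * b := by
    intro a b
    obtain ⟨m, rfl⟩ : ∃ m, N = m + 1 := ⟨N - 1, by omega⟩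
    unfold Dmat
    rw [Matrix.trace_diagonal, Fin.sum_univ_succ]
    simp
  refine ⟨hlam, hlL, by linarith, ?_, ?_, ?_⟩
  · intro a b s hs
    have := hF1 (Dmat N a b) (Dmat N s 0) (hsymm _ _) (hpos _ _ hs le_rfl)
    rw [hadd, htr] at this
    simpa using this
  · intro a b s hs
    have := hF1 (Dmat N a b) (Dmat N 0 s) (hsymm _ _) (hpos _ _ le_rfl hs)
    rw [hadd, htr] at this
    simpa [mul_assoc] using this
  · intro t a b ht
    have := hF3 t ht (Dmat N a b)
    rw [← this]
    show F _ = F _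
    congr 1
    unfold Dmat
    rw [← Matrix.diagonal_smul]
    congr 1
    ext i
    simp only [Pi.smul_apply, smul_eq_mul]
    split_ifs <;> rfl

namespace GP

variable {G : ℝ → ℝ → ℝ} {l L n : ℝ}

lemma L0 (h : GP G l L n) : 0 < L := lt_of_lt_of_le h.l0 h.lL

lemma n0 (h : GP G l L n) : 0 < n := by
  have h1 := h.hk
  have h2 : 0 < l / L := div_pos h.l0 h.L0
  by_contra hn
  push Not at hn
  nlinarith [mul_nonneg h2.le (neg_nonneg.2 hn)]

lemma zero (h : GP G l L n) : G 0 0 = 0 := by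
  have := h.h3 2 0 0 (by norm_num)
  simp at this
  linarith

lemma kn (h : GP G l L n) : l / L * n ≤ n := by
  have h2 : l / L ≤ 1 := (div_le_one h.L0).2 h.lL
  nlinarith [h.n0]

lemma kL (h : GP G l L n) : L * (l / L * n) = l * n := by
  have := h.L0
  field_simp

/-- lower and upper bounds for the difference in the first variable -/
lemma d1 (h : GP G l L n) (a a' b : ℝ) (haa : a ≤ a') :
    l * (a' - a) ≤ G a' b - G a b ∧ G a' b - G a b ≤ L * (a' - a) := by
  have := h.h1 a b (a' - a) (by linarith)
  simpa using this

lemma d2 (h : GP G l L n) (a b b' : ℝ) (hbb : b ≤ b') :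
    l * n * (b' - b) ≤ G a b' - G a b ∧ G a b' - G a b ≤ L * n * (b' - b) := by
  have := h.h2 a b (b' - b) (by linarith)
  simpa using this

lemma E1 (h : GP G l L n) {a b a' b' : ℝ} (hb : b < b') (hG : G a' b' ≤ G a b) :
    -(l / L * n) * (b - b') ≤ a - a' := by
  have e2 := (h.d2 a b b' hb.le).1
  have hl := h.l0
  have hn := h.n0
  have hL := h.L0
  have hkL := h.kL
  have p : 0 < l * n * (b' - b) := mul_pos (mul_pos hl hn) (by linarith)
  rcases le_total a a' with haa | haa
  · have e1 := (h.d1 a a' b' haa).1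
    nlinarith [mul_nonneg hl.le (sub_nonneg.2 haa)]
  · have e1 := (h.d1 a' a b' haa).2
    have : L * (-(l / L * n) * (b - b')) ≤ L * (a - a') := by
      have : L * (-(l / L * n) * (b - b')) = (L * (l / L * n)) * (b' - b) := by ring
      rw [this, hkL]
      linarith
    exact le_of_mul_le_mul_left this hL

lemma E2 (h : GP G l L n) {w y c : ℝ} (hy : 0 ≤ y) (hc : 0 ≤ c) (hG : G (-w) (-y) = -c) :
    w + l / L * n * y ≤ c / l := by
  have e2 := (h.d2 0 (-y) 0 (by linarith)).1
  rw [h.zero] at e2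
  have hl := h.l0
  have hL := h.L0
  have hkL := h.kL
  rw [le_div_iff₀ hl]
  rcases le_total 0 w with hw | hw
  · have e1 := (h.d1 (-w) 0 (-y) (by linarith)).1
    have : l / L * n * y ≤ n * y := mul_le_mul_of_nonneg_right h.kn hy
    nlinarith
  · have e1 := (h.d1 0 (-w) (-y) (by linarith)).2
    have : L * (w + l / L * n * y) ≤ c := by
      have : L * (w + l / L * n * y) = L * w + (L * (l / L * n)) * y := by ring
      rw [this, hkL]
      linarith
    rcases le_total 0 (w + l / L * n * y) with hq | hq
    · nlinarith [h.lL]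
    · nlinarith

lemma E3 (h : GP G l L n) {w y : ℝ} (hy : 0 ≤ y) (hG : G (-w) (-y) ≤ 0) :
    0 ≤ w + L * n / l * y := by
  have e2 := (h.d2 0 (-y) 0 (by linarith)).2
  rw [h.zero] at e2
  have hl := h.l0
  have hL := h.L0
  have hn := h.n0
  rcases le_total 0 w with hw | hw
  · positivity
  · have e1 := (h.d1 0 (-w) (-y) (by linarith)).1
    have : 0 ≤ l * (w + L * n / l * y) := by
      have : l * (w + L * n / l * y) = l * w + L * n * y := by field_simp
      rw [this]; linarith
    exact nonneg_of_mul_nonneg_right this hl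

lemma lip2 (h : GP G l L n) (a b b' : ℝ) : |G a b - G a b'| ≤ L * n * |b - b'| := by
  have p : 0 < l * n := mul_pos h.l0 h.n0
  rcases le_total b b' with hb | hb
  · have := h.d2 a b b' hb
    rw [abs_sub_comm, abs_sub_comm b, abs_of_nonneg (by linarith : 0 ≤ b' - b), abs_of_nonneg]
    · exact this.2
    · nlinarith [mul_nonneg p.le (by linarith : 0 ≤ b' - b)]
  · have := h.d2 a b' b hb
    rw [abs_of_nonneg (by linarith : 0 ≤ b - b'), abs_of_nonneg]
    · exact this.2
    · nlinarith [mul_nonneg p.le (by linarith : 0 ≤ b - b')]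

lemma lip1 (h : GP G l L n) (a a' b : ℝ) : |G a b - G a' b| ≤ L * |a - a'| := by
  have p : 0 < l := h.l0
  rcases le_total a a' with hb | hb
  · have := h.d1 a a' b hb
    rw [abs_sub_comm, abs_sub_comm a, abs_of_nonneg (by linarith : 0 ≤ a' - a), abs_of_nonneg]
    · exact this.2
    · nlinarith [mul_nonneg p.le (by linarith : 0 ≤ a' - a)]
  · have := h.d1 a' a b hb
    rw [abs_of_nonneg (by linarith : 0 ≤ a - a'), abs_of_nonneg]
    · exact this.2
    · nlinarith [mul_nonneg p.le (by linarith : 0 ≤ a - a')]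

lemma colip1 (h : GP G l L n) (a a' b : ℝ) : l * |a - a'| ≤ |G a b - G a' b| := by
  have p : 0 < l := h.l0
  rcases le_total a a' with hb | hb
  · have := h.d1 a a' b hb
    rw [abs_sub_comm, abs_sub_comm (G a b), abs_of_nonneg (by linarith : 0 ≤ a' - a)]
    exact this.1.trans (le_abs_self _)
  · have := h.d1 a' a b hb
    rw [abs_of_nonneg (by linarith : 0 ≤ a - a')]
    exact this.1.trans (le_abs_self _)

lemma E4 (h : GP G l L n) (a b a' b' : ℝ) :
    |a - a'| ≤ (|G a b - G a' b'| + L * n * |b - b'|) / l := by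
  rw [le_div_iff₀ h.l0]
  have e1 := h.colip1 a a' b
  have e2 := h.lip2 a' b b'
  have e3 : |G a b - G a' b| ≤ |G a b - G a' b'| + |G a' b - G a' b'| := by
    rw [abs_sub_comm (G a' b)]
    exact abs_sub_le _ _ _
  linarith

lemma surj (h : GP G l L n) (b c : ℝ) : ∃ a, G a b = c := by
  have hcont : Continuous (fun a => G a b) := by
    have : LipschitzWith (Real.toNNReal L) (fun a => G a b) := by
      apply LipschitzWith.of_dist_le_mul
      intro x y
      rw [Real.coe_toNNReal _ h.L0.le, Real.dist_eq, Real.dist_eq]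
      exact h.lip1 x y b
    exact this.continuous
  have hl := h.l0
  have hup : G (|c - G 0 b| / l) b ≥ c := by
    have := (h.d1 0 (|c - G 0 b| / l) b (by positivity)).1
    have e : l * (|c - G 0 b| / l - 0) = |c - G 0 b| := by field_simp; ring
    rw [e] at this
    linarith [le_abs_self (c - G 0 b)]
  have hdn : G (-(|c - G 0 b| / l)) b ≤ c := by
    have := (h.d1 (-(|c - G 0 b| / l)) 0 b (by simp; positivity)).1
    have e : l * (0 - -(|c - G 0 b| / l)) = |c - G 0 b| := by field_simp; ring
    rw [e] at this
    linarith [neg_abs_le (c - G 0 b)]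
  exact mem_range_of_exists_le_of_exists_ge hcont ⟨_, hdn⟩ ⟨_, hup⟩

/-- A continuous inverse of `G` in the first variable. -/
lemma exists_inv (h : GP G l L n) :
    ∃ I : ℝ × ℝ → ℝ, Continuous I ∧ (∀ b c, G (I (b, c)) b = c) ∧
      ∀ a b c, G a b = c → a = I (b, c) := by
  choose I hI using h.surj
  refine ⟨fun x => I x.1 x.2, ?_, fun b c => hI b c, ?_⟩
  · rw [continuous_iff_continuousAt]
    rintro ⟨b, c⟩
    unfold ContinuousAt
    rw [tendsto_iff_dist_tendsto_zero]
    refine squeeze_zero (g := fun x : ℝ × ℝ => (|x.2 - c| + L * n * |x.1 - b|) / l)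
      (fun _ => dist_nonneg) ?_ ?_
    · rintro ⟨b', c'⟩
      have := h.E4 (I b' c') b' (I b c) b
      rw [hI, hI] at this
      exact this
    · have : Continuous (fun x : ℝ × ℝ => (|x.2 - c| + L * n * |x.1 - b|) / l) := by fun_prop
      have := this.tendsto (b, c)
      simpa using this
  · intro a b c hG
    have := h.E4 a b (I b c) b
    rw [hI, hG] at this
    simp at this
    linarith

end GP

/-- The Serrin-type non-integrability lemma. -/
lemma no_log {w p : ℝ → ℝ} {s c B : ℝ} (hs : 0 < s) (hc : 0 < c)
    (hw : ∀ r ∈ Ioo 0 s, HasDerivAt w (p r) r) (hB : ∀ r ∈ Ioo 0 s, w r ≤ B)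
    (hp : ∀ r ∈ Ioo 0 s, p r ≤ -c / r) : False := by
  have hd : ∀ r ∈ Ioo 0 s, HasDerivAt (fun x => w x + c * Real.log x) (p r + c * r⁻¹) r := by
    intro r hr
    exact (hw r hr).add ((Real.hasDerivAt_log hr.1.ne').const_mul c)
  have anti : AntitoneOn (fun x => w x + c * Real.log x) (Ioo 0 s) := by
    apply antitoneOn_of_deriv_nonpos (convex_Ioo _ _)
    · intro r hr; exact (hd r hr).continuousAt.continuousWithinAt
    · rw [interior_Ioo]
      intro r hr; exact (hd r hr).differentiableAt.differentiableWithinAt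
    · rw [interior_Ioo]
      intro r hr
      rw [(hd r hr).deriv]
      have := hp r hr
      rw [neg_div, div_eq_mul_inv] at this
      linarith
  have hs2 : s / 2 ∈ Ioo 0 s := ⟨by linarith, by linarith⟩
  set A := w (s / 2) + c * Real.log (s / 2) with hA
  have hbd : ∀ r ∈ Ioo 0 (s/2), (A - B) / c ≤ Real.log r := by
    intro r hr
    have hr' : r ∈ Ioo 0 s := ⟨hr.1, by linarith [hr.2]⟩
    have := anti hr' hs2 hr.2.le
    have h2 := hB r hr'
    rw [div_le_iff₀ hc]
    simp only at this
    linarith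
  have t1 := Real.tendsto_log_nhdsGT_zero.eventually (eventually_lt_atBot ((A - B) / c))
  have t2 : ∀ᶠ r in nhdsWithin (0:ℝ) (Ioi 0), r ∈ Ioo 0 (s/2) := Ioo_mem_nhdsGT hs2.1
  obtain ⟨r, h1, h2⟩ := (t1.and t2).exists
  linarith [hbd r h2]

lemma mono_neg {f f' : ℝ → ℝ} {a b : ℝ} (hab : a ≤ b)
    (hf : ∀ r ∈ Icc a b, HasDerivAt f (f' r) r)
    (hp : ∀ r ∈ Icc a b, f r < 0 → 0 ≤ f' r) (hb : f b < 0) : f a ≤ f b := by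
  by_contra hlt
  push Not at hlt
  obtain ⟨c, hc1, hc2⟩ : ∃ c, f b < c ∧ c < min (f a) 0 := exists_between (lt_min hlt hb)
  have hca := lt_of_lt_of_le hc2 (min_le_left _ _)
  have hc0 := lt_of_lt_of_le hc2 (min_le_right _ _)
  have hcont : ContinuousOn f (Icc a b) := fun r hr => (hf r hr).continuousAt.continuousWithinAt
  have hcl : IsClosed {x ∈ Icc a b | c ≤ f x} :=
    (hcont.preimage_isClosed_of_isClosed isClosed_Icc isClosed_Ici)
  have hcpt : IsCompact {x ∈ Icc a b | c ≤ f x} :=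
    isCompact_Icc.of_isClosed_subset hcl (fun x hx => hx.1)
  have hne : {x ∈ Icc a b | c ≤ f x}.Nonempty := ⟨a, ⟨le_rfl, hab⟩, hca.le⟩
  obtain ⟨hx1, hx2⟩ := hcpt.sSup_mem hne
  set x := sSup {x ∈ Icc a b | c ≤ f x} with hx
  have hlt' : ∀ y ∈ Ioc x b, f y < c := by
    intro y hy
    by_contra hcon
    push Not at hcon
    have : y ≤ x := le_csSup hcpt.bddAbove ⟨⟨by linarith [hy.1, hx1.1], hy.2⟩, hcon⟩
    linarith [hy.1]
  have hsub : ∀ y ∈ Icc x b, y ∈ Icc a b := fun y hy => ⟨by linarith [hy.1, hx1.1], hy.2⟩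
  have hm : MonotoneOn f (Icc x b) := by
    apply monotoneOn_of_deriv_nonneg (convex_Icc _ _)
    · exact hcont.mono hsub
    · rw [interior_Icc]
      intro r hr
      exact (hf r (hsub r (Ioo_subset_Icc_self hr))).differentiableAt.differentiableWithinAt
    · rw [interior_Icc]
      intro r hr
      have hr' := hsub r (Ioo_subset_Icc_self hr)
      rw [(hf r hr').deriv]
      exact hp r hr' (by linarith [hlt' r ⟨hr.1, hr.2.le⟩])
  have := hm ⟨le_rfl, hx1.2⟩ ⟨hx1.2, le_rfl⟩ hx1.2
  linarith

/-- derivative of `r ^ k * p r` -/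
lemma hd_pow_mul {p p' : ℝ → ℝ} {r k : ℝ} (hr : 0 < r) (hp : HasDerivAt p (p' r) r) :
    HasDerivAt (fun x => x ^ k * p x) (r ^ k * (p' r + k * (p r / r))) r := by
  have := (Real.hasDerivAt_rpow_const (x := r) (p := k) (Or.inl hr.ne')).mul hp
  refine HasDerivAt.congr_deriv this ?_
  rw [Real.rpow_sub_one hr.ne']
  field_simp
  ring

/-- Lemma A: bounded above subsolutions are nondecreasing. -/
lemma lemmaA {w p p' : ℝ → ℝ} {k B : ℝ} (hk : 1 ≤ k)
    (hw : ∀ r ∈ Ioo (0:ℝ) 1, HasDerivAt w (p r) r)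
    (hp : ∀ r ∈ Ioo (0:ℝ) 1, HasDerivAt p (p' r) r)
    (hB : ∀ r ∈ Ioo (0:ℝ) 1, w r ≤ B)
    (hsub : ∀ r ∈ Ioo (0:ℝ) 1, p r < 0 → -k * (p r / r) ≤ p' r) :
    ∀ r ∈ Ioo (0:ℝ) 1, 0 ≤ p r := by
  intro r0 hr0
  by_contra hneg
  push Not at hneg
  have hc : 0 < -(r0 ^ k * p r0) := by
    have := Real.rpow_pos_of_pos hr0.1 k
    nlinarith
  refine no_log (w := w) (p := p) (B := B) hr0.1 hc (fun r hr => hw r ⟨hr.1, hr.2.trans hr0.2⟩)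
    (fun r hr => hB r ⟨hr.1, hr.2.trans hr0.2⟩) ?_
  intro r hr
  have hIcc : ∀ x ∈ Icc r r0, x ∈ Ioo (0:ℝ) 1 :=
    fun x hx => ⟨lt_of_lt_of_le hr.1 hx.1, lt_of_le_of_lt hx.2 hr0.2⟩
  have := mono_neg (f := fun x => x ^ k * p x) hr.2.le
    (fun x hx => hd_pow_mul (k := k) (hIcc x hx).1 (hp x (hIcc x hx))) ?_ (by linarith)
  · rw [neg_neg, le_div_iff₀ hr.1]
    have hrk : 0 < r ^ k := Real.rpow_pos_of_pos hr.1 k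
    have hrk1 : r ^ k ≤ r := by
      have := Real.rpow_le_rpow_of_exponent_ge hr.1 (hr.2.trans hr0.2).le hk
      simpa using this
    have hpr : p r < 0 := by
      by_contra hcon
      push Not at hcon
      have := mul_nonneg hrk.le hcon
      linarith
    nlinarith
  · intro x hx hlt
    have hxk : 0 < x ^ k := Real.rpow_pos_of_pos (hIcc x hx).1 k
    have hpx : p x < 0 := by
      by_contra hcon
      push Not at hcon
      have := mul_nonneg hxk.le hcon
      linarith
    have := hsub x (hIcc x hx) hpx
    apply mul_nonneg hxk.le
    linarith

/-- Monotonicity on `(0,1]` from the derivative sign. -/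
lemma mono_of {w p : ℝ → ℝ} {D : Set ℝ} (hD : Convex ℝ D) (hIntr : interior D = Ioo 0 1)
    (hc : ContinuousOn w D)
    (hw : ∀ r ∈ Ioo (0:ℝ) 1, HasDerivAt w (p r) r)
    (hp : ∀ r ∈ Ioo (0:ℝ) 1, 0 ≤ p r) : MonotoneOn w D := by
  apply monotoneOn_of_deriv_nonneg hD hc
  · rw [hIntr]
    intro r hr
    exact (hw r hr).differentiableAt.differentiableWithinAt
  · rw [hIntr]
    intro r hr
    rw [(hw r hr).deriv]
    exact hp r hr

lemma anti_of {w p : ℝ → ℝ} {D : Set ℝ} (hD : Convex ℝ D) (hIntr : interior D = Ioo 0 1)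
    (hc : ContinuousOn w D)
    (hw : ∀ r ∈ Ioo (0:ℝ) 1, HasDerivAt w (p r) r)
    (hp : ∀ r ∈ Ioo (0:ℝ) 1, p r ≤ 0) : AntitoneOn w D := by
  apply antitoneOn_of_deriv_nonpos hD hc
  · rw [hIntr]
    intro r hr
    exact (hw r hr).differentiableAt.differentiableWithinAt
  · rw [hIntr]
    intro r hr
    rw [(hw r hr).deriv]
    exact hp r hr

/-- Nonnegative supersolutions are nonincreasing. -/
lemma super_noninc {G : ℝ → ℝ → ℝ} {l L n : ℝ} (h : GP G l L n) {v p s : ℝ → ℝ}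
    (hv : ∀ r ∈ Ioo (0:ℝ) 1, HasDerivAt v (p r) r)
    (hp : ∀ r ∈ Ioo (0:ℝ) 1, HasDerivAt p (s r) r)
    (hpos : ∀ r ∈ Ioo (0:ℝ) 1, 0 ≤ v r)
    (hG : ∀ r ∈ Ioo (0:ℝ) 1, G (s r) (p r / r) ≤ 0) :
    ∀ r ∈ Ioo (0:ℝ) 1, p r ≤ 0 := by
  have := lemmaA (w := fun r => - v r) (p := fun r => - p r) (p' := fun r => - s r) (B := 0)
    h.hk.le (fun r hr => (hv r hr).neg) (fun r hr => (hp r hr).neg)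
    (fun r hr => by linarith [hpos r hr]) ?_
  · intro r hr
    linarith [this r hr]
  · intro r hr hlt
    have := h.E1 (a := 0) (b := 0) (a' := s r) (b' := p r / r) (div_pos (by linarith) hr.1)
      (by rw [h.zero]; exact hG r hr)
    rw [neg_div]
    linarith

/-- Lemma B: comparison. -/
lemma lemmaB {G : ℝ → ℝ → ℝ} {l L n : ℝ} (h : GP G l L n) {U p s v q t c1 c2 : ℝ → ℝ}
    (hUc : ContinuousOn U (Icc 0 1)) (hUpos : ∀ r ∈ Ioo (0:ℝ) 1, 0 < U r) (hU1 : U 1 = 0)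
    (hU : ∀ r ∈ Ioo (0:ℝ) 1, HasDerivAt U (p r) r)
    (hp : ∀ r ∈ Ioo (0:ℝ) 1, HasDerivAt p (s r) r)
    (hUG : ∀ r ∈ Ioo (0:ℝ) 1, G (s r) (p r / r) = - (c1 r * U r))
    (hvc : ContinuousOn v (Ioc 0 1)) (hvpos : ∀ r ∈ Ioc (0:ℝ) 1, 0 < v r)
    (hv : ∀ r ∈ Ioo (0:ℝ) 1, HasDerivAt v (q r) r)
    (hq : ∀ r ∈ Ioo (0:ℝ) 1, HasDerivAt q (t r) r)
    (hvG : ∀ r ∈ Ioo (0:ℝ) 1, G (t r) (q r / r) ≤ - (c2 r * v r))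
    (hc1 : ∀ r ∈ Ioo (0:ℝ) 1, 0 ≤ c1 r)
    (hc12 : ∀ r ∈ Ioo (0:ℝ) 1, c1 r ≤ c2 r) : False := by
  have hIntr : interior (Ioc (0:ℝ) 1) = Ioo 0 1 := interior_Ioc
  have hsub : ∀ r ∈ Ioo (0:ℝ) 1, r ∈ Ioc (0:ℝ) 1 := fun r hr => ⟨hr.1, hr.2.le⟩
  have h1m : (1:ℝ) ∈ Ioc (0:ℝ) 1 := ⟨one_pos, le_rfl⟩
  have hv1 := hvpos 1 h1m
  have hq0 := super_noninc h hv hq (fun r hr => (hvpos r (hsub r hr)).le) (fun r hr => by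
    have := hvG r hr
    have := mul_nonneg ((hc1 r hr).trans (hc12 r hr)) (hvpos r (hsub r hr)).le
    linarith)
  have hvanti := anti_of (convex_Ioc 0 1) hIntr hvc hv hq0
  have hvge : ∀ r ∈ Ioo (0:ℝ) 1, v 1 ≤ v r := fun r hr => hvanti (hsub r hr) h1m hr.2.le
  obtain ⟨M, hM⟩ := isCompact_Icc.bddAbove_image hUc
  have hM : ∀ r ∈ Ioo (0:ℝ) 1, U r ≤ M := fun r hr => hM ⟨r, ⟨hr.1.le, hr.2.le⟩, rfl⟩
  have hhalf : (1/2:ℝ) ∈ Ioo (0:ℝ) 1 := by constructor <;> norm_num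
  have hM0 : 0 < M := lt_of_lt_of_le (hUpos _ hhalf) (hM _ hhalf)
  -- the set of admissible ratios
  set S : Set ℝ := (fun r => U r / v r) '' Ioo (0:ℝ) 1 with hS
  have hSb : BddAbove S := by
    refine ⟨M / v 1, ?_⟩
    rintro _ ⟨r, hr, rfl⟩
    exact div_le_div₀ hM0.le (hM r hr) hv1 (hvge r hr)
  have hSne : S.Nonempty := ⟨_, _, hhalf, rfl⟩
  set T := sSup S with hT
  have hUT : ∀ r ∈ Ioo (0:ℝ) 1, U r ≤ T * v r := by
    intro r hr
    rw [← div_le_iff₀ (hvpos r (hsub r hr))]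
    exact le_csSup hSb ⟨r, hr, rfl⟩
  have hT0 : 0 < T := lt_of_lt_of_le (div_pos (hUpos _ hhalf) (hvpos _ (hsub _ hhalf)))
    (le_csSup hSb ⟨_, hhalf, rfl⟩)
  have hwd : ∀ r ∈ Ioo (0:ℝ) 1, HasDerivAt (fun x => U x - T * v x) (p r - T * q r) r :=
    fun r hr => (hU r hr).sub ((hv r hr).const_mul T)
  have hw' := lemmaA (w := fun r => U r - T * v r) (p := fun r => p r - T * q r)
    (p' := fun r => s r - T * t r) (B := 0) h.hk.le hwd
    (fun r hr => (hp r hr).sub ((hq r hr).const_mul T))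
    (fun r hr => by linarith [hUT r hr]) (by
      intro r hr hlt
      have hG1 : G (T * t r) (T * (q r / r)) ≤ G (s r) (p r / r) := by
        rw [h.h3 T _ _ hT0, hUG r hr]
        have e1 := mul_le_mul_of_nonneg_left (hvG r hr) hT0.le
        have e2 := mul_le_mul_of_nonneg_left (hUT r hr) (hc1 r hr)
        have e3 := mul_le_mul_of_nonneg_right (hc12 r hr)
          (mul_nonneg hT0.le (hvpos r (hsub r hr)).le)
        linarith
      have hlt2 : p r / r < T * (q r / r) := by
        rw [← mul_div_assoc]
        exact div_lt_div_of_pos_right (by linarith) hr.1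
      have := h.E1 hlt2 hG1
      calc -(l / L * n) * ((p r - T * q r) / r) = -(l / L * n) * (p r / r - T * (q r / r)) := by
            ring
        _ ≤ _ := this)
  have hmono := mono_of (convex_Ioc 0 1) hIntr
    ((hUc.mono Ioc_subset_Icc_self).sub (hvc.const_smul T |>.congr (g := fun x => T * v x) (fun x _ => rfl))) hwd hw'
  have hkey : ∀ r ∈ Ioo (0:ℝ) 1, U r ≤ T * v r - T * v 1 := by
    intro r hr
    have := hmono (hsub r hr) h1m hr.2.le
    simp only [hU1, Pi.sub_apply] at this
    linarith
  -- improved bound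
  set d := min (1/2) (T * v 1 / (2 * M)) with hd
  have hd0 : 0 < d := lt_min (by norm_num) (by positivity)
  have : T ≤ T * (1 - d) := by
    apply csSup_le hSne
    rintro _ ⟨r, hr, rfl⟩
    have hvr := hvpos r (hsub r hr)
    show U r / v r ≤ _
    rw [div_le_iff₀ hvr]
    rcases le_total (2 * M) (T * v r) with hcase | hcase
    · have := hM r hr
      have hd1 : d ≤ 1/2 := min_le_left _ _
      nlinarith [mul_pos hT0 hvr]
    · have hd2 : d ≤ T * v 1 / (2 * M) := min_le_right _ _
      have := hkey r hr
      have e : d * (T * v r) ≤ T * v 1 := by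
        calc d * (T * v r) ≤ (T * v 1 / (2 * M)) * (2 * M) := by
              apply mul_le_mul hd2 hcase (by positivity) (by positivity)
          _ = T * v 1 := by field_simp
      nlinarith
  nlinarith [mul_pos hT0 hd0]

/-- The regularized potential. -/
def Qpot (γ ε r : ℝ) : ℝ := (r ^ 2 + ε ^ 2) ^ (-(γ / 2))

lemma Qpot_zero {γ r : ℝ} (hr : 0 < r) : Qpot γ 0 r = r ^ (-γ) := by
  unfold Qpot
  have : r ^ 2 + 0 ^ 2 = r ^ (2:ℝ) := by simp
  rw [this, ← Real.rpow_mul hr.le]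
  congr 1
  ring

lemma Qpot_pos {γ ε r : ℝ} (hr : 0 < r) : 0 < Qpot γ ε r := by
  unfold Qpot
  positivity

lemma Qpot_le {γ ε1 ε2 r1 r2 : ℝ} (hγ : 0 < γ) (hr : 0 < r1) (hrr : r1 ≤ r2) (he : 0 ≤ ε1)
    (hee : ε1 ≤ ε2) : Qpot γ ε2 r2 ≤ Qpot γ ε1 r1 := by
  unfold Qpot
  apply Real.rpow_le_rpow_of_nonpos
  · positivity
  · gcongr
  · linarith

/-- Eigenfunctions, with explicit first and second derivatives. -/
structure Sol (G : ℝ → ℝ → ℝ) (γ μ ε : ℝ) (U p s : ℝ → ℝ) : Prop where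
  cont : ContinuousOn U (Icc 0 1)
  pos : ∀ r ∈ Ico (0:ℝ) 1, 0 < U r
  U0 : U 0 = 1
  U1 : U 1 = 0
  dU : ∀ r ∈ Ioo (0:ℝ) 1, HasDerivAt U (p r) r
  dp : ∀ r ∈ Ioo (0:ℝ) 1, HasDerivAt p (s r) r
  eq : ∀ r ∈ Ioo (0:ℝ) 1, G (s r) (p r / r) = -(μ * Qpot γ ε r * U r)

lemma lemmaC {G : ℝ → ℝ → ℝ} {l L n : ℝ} (h : GP G l L n) {γ μ1 μ2 ε1 ε2 : ℝ}
    {U p s u q t : ℝ → ℝ} (hγ : 0 < γ) (he : 0 ≤ ε1) (hee : ε1 ≤ ε2) (hμ : 0 ≤ μ1)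
    (hS : Sol G γ μ1 ε2 U p s) (hupos : ∀ r ∈ Ioo (0:ℝ) 1, 0 < u r)
    (hu : ∀ r ∈ Ioo (0:ℝ) 1, HasDerivAt u (q r) r)
    (hq : ∀ r ∈ Ioo (0:ℝ) 1, HasDerivAt q (t r) r)
    (huG : ∀ r ∈ Ioo (0:ℝ) 1, G (t r) (q r / r) ≤ -(μ2 * Qpot γ ε1 r * u r)) :
    μ2 ≤ μ1 := by
  by_contra hlt
  push Not at hlt
  have hμ2 : 0 < μ2 := lt_of_le_of_lt hμ hlt
  have hx0 : 0 ≤ μ1 / μ2 := by positivity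
  have hx1 : μ1 / μ2 < 1 := (div_lt_one hμ2).2 hlt
  have hxe : μ1 / μ2 * μ2 = μ1 := by field_simp
  set x := μ1 / μ2 with hx
  set ρ := (1 + x) / 2 with hρ
  have hρ0 : 0 < ρ := by rw [hρ]; linarith
  have hρ1 : ρ < 1 := by rw [hρ]; linarith
  have hρ2 : μ1 ≤ ρ ^ 2 * μ2 := by
    rw [← hxe]
    apply mul_le_mul_of_nonneg_right _ hμ2.le
    rw [hρ]
    nlinarith [sq_nonneg (1 - x)]
  have hmem : ∀ r ∈ Ioc (0:ℝ) 1, ρ * r ∈ Ioo (0:ℝ) 1 := by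
    intro r hr
    refine ⟨mul_pos hρ0 hr.1, ?_⟩
    nlinarith [hr.1, hr.2]
  have hsub : ∀ r ∈ Ioo (0:ℝ) 1, r ∈ Ioc (0:ℝ) 1 := fun r hr => ⟨hr.1, hr.2.le⟩
  have hid : ∀ r, HasDerivAt (fun x : ℝ => ρ * x) ρ r := by
    intro r
    simpa using (hasDerivAt_id r).const_mul ρ
  have hdv : ∀ r ∈ Ioc (0:ℝ) 1, HasDerivAt (fun x => u (ρ * x)) (ρ * q (ρ * r)) r := by
    intro r hr
    have := (hu _ (hmem r hr)).comp r (hid r)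
    rw [mul_comm]
    exact this
  have hdq : ∀ r ∈ Ioo (0:ℝ) 1, HasDerivAt (fun x => ρ * q (ρ * x)) (ρ ^ 2 * t (ρ * r)) r := by
    intro r hr
    have := ((hq _ (hmem r (hsub r hr))).comp r (hid r)).const_mul ρ
    refine HasDerivAt.congr_deriv this ?_
    ring
  refine lemmaB h (c1 := fun r => μ1 * Qpot γ ε2 r) (c2 := fun r => ρ ^ 2 * μ2 * Qpot γ ε2 r)
    hS.cont (fun r hr => hS.pos r ⟨hr.1.le, hr.2⟩) hS.U1 hS.dU hS.dp hS.eq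
    (v := fun x => u (ρ * x)) (fun r hr => (hdv r hr).continuousAt.continuousWithinAt)
    (fun r hr => hupos _ (hmem r hr)) (fun r hr => hdv r (hsub r hr)) hdq ?_ ?_ ?_
  · intro r hr
    have hm := hmem r (hsub r hr)
    have e1 : ρ * q (ρ * r) / r = ρ ^ 2 * (q (ρ * r) / (ρ * r)) := by
      have := hr.1
      field_simp
    rw [e1, h.h3 _ _ _ (by positivity : 0 < ρ ^ 2)]
    have e2 := mul_le_mul_of_nonneg_left (huG _ hm) (by positivity : 0 ≤ ρ ^ 2)
    have hQ : Qpot γ ε2 r ≤ Qpot γ ε1 (ρ * r) :=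
      Qpot_le hγ hm.1 (by nlinarith [hr.1]) he hee
    have e3 : ρ ^ 2 * μ2 * u (ρ * r) * Qpot γ ε2 r ≤ ρ ^ 2 * μ2 * u (ρ * r) * Qpot γ ε1 (ρ * r) :=
      mul_le_mul_of_nonneg_left hQ (mul_nonneg (by positivity) (hupos _ hm).le)
    linarith
  · intro r hr
    exact mul_nonneg hμ (Qpot_pos hr.1).le
  · intro r hr
    exact mul_le_mul_of_nonneg_right hρ2 (Qpot_pos hr.1).le

section bounds

variable {G : ℝ → ℝ → ℝ} {l L n : ℝ} {γ μ ε : ℝ} {U p s : ℝ → ℝ}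

lemma Sol.p_nonpos (h : GP G l L n) (hμ : 0 ≤ μ) (hS : Sol G γ μ ε U p s) :
    ∀ r ∈ Ioo (0:ℝ) 1, p r ≤ 0 := by
  refine super_noninc h hS.dU hS.dp (fun r hr => (hS.pos r ⟨hr.1.le, hr.2⟩).le) ?_
  intro r hr
  rw [hS.eq r hr]
  have := mul_nonneg (mul_nonneg hμ (Qpot_pos (γ := γ) (ε := ε) hr.1).le)
    (hS.pos r ⟨hr.1.le, hr.2⟩).le
  linarith

lemma Sol.anti (h : GP G l L n) (hμ : 0 ≤ μ) (hS : Sol G γ μ ε U p s) :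
    AntitoneOn U (Icc 0 1) :=
  anti_of (convex_Icc 0 1) interior_Icc hS.cont hS.dU (hS.p_nonpos h hμ)

lemma Sol.le_one (h : GP G l L n) (hμ : 0 ≤ μ) (hS : Sol G γ μ ε U p s) :
    ∀ r ∈ Icc (0:ℝ) 1, U r ≤ 1 := by
  intro r hr
  rw [← hS.U0]
  exact hS.anti h hμ ⟨le_rfl, zero_le_one⟩ hr hr.1

lemma Sol.nonneg (h : GP G l L n) (hμ : 0 ≤ μ) (hS : Sol G γ μ ε U p s) :
    ∀ r ∈ Icc (0:ℝ) 1, 0 ≤ U r := by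
  intro r hr
  rw [← hS.U1]
  exact hS.anti h hμ hr ⟨zero_le_one, le_rfl⟩ hr.2

lemma Sol.rhs_bd (h : GP G l L n) (hγ : 0 < γ) (hε : 0 ≤ ε) (hμ : 0 ≤ μ)
    (hS : Sol G γ μ ε U p s) {M : ℝ} (hM : μ ≤ M) :
    ∀ r ∈ Ioo (0:ℝ) 1, 0 ≤ μ * Qpot γ ε r * U r ∧ μ * Qpot γ ε r * U r ≤ M * r ^ (-γ) := by
  intro r hr
  have hr' : r ∈ Icc (0:ℝ) 1 := ⟨hr.1.le, hr.2.le⟩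
  have h1 := hS.le_one h hμ r hr'
  have h0 := hS.nonneg h hμ r hr'
  have hQ0 : 0 < Qpot γ ε r := Qpot_pos hr.1
  have hQ : Qpot γ ε r ≤ r ^ (-γ) := by
    rw [← Qpot_zero hr.1]
    exact Qpot_le hγ hr.1 le_rfl le_rfl hε
  refine ⟨by positivity, ?_⟩
  calc μ * Qpot γ ε r * U r ≤ μ * Qpot γ ε r * 1 := by gcongr
    _ = μ * Qpot γ ε r := mul_one _
    _ ≤ M * r ^ (-γ) := by
      apply mul_le_mul hM hQ hQ0.le (hμ.trans hM)

lemma Sol.p_bd (h : GP G l L n) (hγ : 0 < γ) (hγ2 : γ < 2) (hε : 0 ≤ ε) (hμ : 0 ≤ μ)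
    (hS : Sol G γ μ ε U p s) {M : ℝ} (hM : μ ≤ M) :
    ∀ r ∈ Ioo (0:ℝ) 1, -p r ≤ M / l / (l / L * n + 1 - γ) * r ^ (1 - γ) := by
  have hk := h.hk
  set k := l / L * n with hkdef
  set C := M / l / (k + 1 - γ) with hC
  have hk2 : 0 < k + 1 - γ := by linarith
  have hCk : C * (k + 1 - γ) = M / l := by rw [hC]; field_simp
  have hd : ∀ r ∈ Ioo (0:ℝ) 1, HasDerivAt (fun x => x ^ k * (-p x) - C * x ^ (k + 1 - γ))
      (r ^ k * (- s r + k * (-p r / r)) - C * ((k + 1 - γ) * r ^ (k + 1 - γ - 1))) r := by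
    intro r hr
    exact (hd_pow_mul (p := fun x => - p x) (p' := fun x => - s x) hr.1 (hS.dp r hr).neg).sub
      ((Real.hasDerivAt_rpow_const (Or.inl hr.1.ne')).const_mul C)
  have hanti : AntitoneOn (fun x => x ^ k * (-p x) - C * x ^ (k + 1 - γ)) (Ioo 0 1) := by
    refine anti_of (convex_Ioo 0 1) interior_Ioo
      (fun r hr => (hd r hr).continuousAt.continuousWithinAt) hd ?_
    intro r hr
    have hp := hS.p_nonpos h hμ r hr
    obtain ⟨b0, b1⟩ := hS.rhs_bd h hγ hε hμ hM r hr
    have := h.E2 (w := - s r) (y := -p r / r) (div_nonneg (by linarith) hr.1.le) b0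
      (by rw [neg_neg, neg_div, neg_neg]; exact hS.eq r hr)
    have e1 : -s r + k * (-p r / r) ≤ M / l * r ^ (-γ) := by
      calc _ ≤ _ := this
        _ ≤ M * r ^ (-γ) / l := by
            have := h.l0
            gcongr
        _ = _ := by ring
    have e2 : r ^ k * r ^ (-γ) = r ^ (k + 1 - γ - 1) := by
      rw [← Real.rpow_add hr.1]; congr 1; ring
    have e3 := mul_le_mul_of_nonneg_left e1 (Real.rpow_pos_of_pos hr.1 k).le
    have e4 : C * ((k + 1 - γ) * r ^ (k + 1 - γ - 1)) = r ^ k * (M / l * r ^ (-γ)) := by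
      rw [← mul_assoc, hCk, ← e2]; ring
    linarith
  intro r0 hr0
  by_contra hcon
  push Not at hcon
  have hr0k := Real.rpow_pos_of_pos hr0.1 k
  have hc : 0 < r0 ^ k * (-p r0) - C * r0 ^ (k + 1 - γ) := by
    have e : r0 ^ (k + 1 - γ) = r0 ^ k * r0 ^ (1 - γ) := by
      rw [← Real.rpow_add hr0.1]; congr 1; ring
    rw [e]
    have := mul_lt_mul_of_pos_left hcon hr0k
    linarith
  have hC0 : 0 ≤ C := by
    have := h.l0
    have := hμ.trans hM
    positivity
  refine no_log (w := U) (p := p) (B := 1) hr0.1 hc (fun r hr => hS.dU r ⟨hr.1, hr.2.trans hr0.2⟩)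
    (fun r hr => hS.le_one h hμ r ⟨hr.1.le, (hr.2.trans hr0.2).le⟩) ?_
  intro r hr
  have hr' : r ∈ Ioo (0:ℝ) 1 := ⟨hr.1, hr.2.trans hr0.2⟩
  have := hanti hr' hr0 hr.2.le
  simp only at this
  rw [le_div_iff₀ hr.1]
  have hrk : 0 < r ^ k := Real.rpow_pos_of_pos hr.1 k
  have hrk1 : r ^ k ≤ r := by
    have := Real.rpow_le_rpow_of_exponent_ge hr.1 hr'.2.le hk.le
    simpa using this
  have hp := hS.p_nonpos h hμ r hr'
  have : 0 ≤ C * r ^ (k + 1 - γ) := mul_nonneg hC0 (Real.rpow_pos_of_pos hr.1 _).le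
  nlinarith

lemma Sol.s_bd (h : GP G l L n) (hγ : 0 < γ) (hγ2 : γ < 2) (hε : 0 ≤ ε) (hμ : 0 ≤ μ)
    (hS : Sol G γ μ ε U p s) {M : ℝ} (hM : μ ≤ M) :
    ∀ r ∈ Ioo (0:ℝ) 1,
      |s r| ≤ (M + L * n * (M / l / (l / L * n + 1 - γ))) / l * r ^ (-γ) := by
  intro r hr
  have hp := hS.p_nonpos h hμ r hr
  have hpb := hS.p_bd h hγ hγ2 hε hμ hM r hr
  set C := M / l / (l / L * n + 1 - γ) with hC
  obtain ⟨b0, b1⟩ := hS.rhs_bd h hγ hε hμ hM r hr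
  have := h.E4 (s r) (p r / r) 0 0
  rw [h.zero, sub_zero, sub_zero, sub_zero, hS.eq r hr, abs_neg, abs_of_nonneg b0,
    abs_of_nonpos (div_nonpos_of_nonpos_of_nonneg hp hr.1.le)] at this
  refine this.trans ?_
  have hl := h.l0
  have hL := h.L0
  have hn := h.n0
  have e : -(p r / r) ≤ C * r ^ (-γ) := by
    rw [← neg_div, div_le_iff₀ hr.1]
    have : r ^ (1 - γ) = r ^ (-γ) * r := by
      rw [← Real.rpow_add_one hr.1.ne']; congr 1; ring
    rw [mul_assoc, ← this]
    exact hpb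
  rw [div_mul_eq_mul_div]
  apply div_le_div_of_nonneg_right _ hl.le
  have := mul_le_mul_of_nonneg_left e (by positivity : 0 ≤ L * n)
  linarith

/-- modulus of continuity for `U` -/
lemma Sol.U_mod (h : GP G l L n) (hγ : 0 < γ) (hγ2 : γ < 2) (hε : 0 ≤ ε) (hμ : 0 ≤ μ)
    (hS : Sol G γ μ ε U p s) {M : ℝ} (hM : μ ≤ M) :
    ∀ x ∈ Icc (0:ℝ) 1, ∀ y ∈ Icc (0:ℝ) 1, x ≤ y →
      |U x - U y| ≤ M / l / (l / L * n + 1 - γ) / (2 - γ) * y ^ (2 - γ)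
        - M / l / (l / L * n + 1 - γ) / (2 - γ) * x ^ (2 - γ) := by
  have hpb := hS.p_bd h hγ hγ2 hε hμ hM
  set C := M / l / (l / L * n + 1 - γ) with hC
  have hm : MonotoneOn (fun x => U x + C / (2 - γ) * x ^ (2 - γ)) (Icc 0 1) := by
    refine mono_of (p := fun r => p r + C / (2 - γ) * ((2 - γ) * r ^ (2 - γ - 1)))
      (convex_Icc 0 1) interior_Icc ?_ ?_ ?_
    · refine hS.cont.add (Continuous.continuousOn ?_)
      exact continuous_const.mul (Real.continuous_rpow_const (by linarith))
    · intro r hr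
      exact (hS.dU r hr).add ((Real.hasDerivAt_rpow_const (Or.inl hr.1.ne')).const_mul _)
    · intro r hr
      have := hpb r hr
      have e : C / (2 - γ) * ((2 - γ) * r ^ (2 - γ - 1)) = C * r ^ (1 - γ) := by
        have h1 : 2 - γ ≠ 0 := by linarith
        have h2 : 2 - γ - 1 = 1 - γ := by ring
        rw [h2]
        field_simp
      rw [e]
      linarith
  intro x hx y hy hxy
  have h1 := hS.anti h hμ hx hy hxy
  have h2 := hm hx hy hxy
  simp only at h2
  rw [abs_of_nonneg (by linarith)]
  linarith

/-- Lipschitz bound for the weighted derivative. -/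
lemma Sol.p_mod (h : GP G l L n) (hγ : 0 < γ) (hγ2 : γ < 2) (hε : 0 ≤ ε) (hμ : 0 ≤ μ)
    (hS : Sol G γ μ ε U p s) {M : ℝ} (hM : μ ≤ M) {C K : ℝ}
    (hC : C = M / l / (l / L * n + 1 - γ)) (hK : K = 2 * C + (M + L * n * C) / l) :
    ∃ g : ℝ → ℝ, (∀ x y, |g x - g y| ≤ K * |x - y|) ∧
      (∀ r ∈ Ioo (0:ℝ) 1, r ^ 2 * p r = g r) ∧ (∀ x ∈ Icc (0:ℝ) 1, |g x| ≤ C + K) := by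
  have hpb := hS.p_bd h hγ hγ2 hε hμ hM
  have hsb := hS.s_bd h hγ hγ2 hε hμ hM
  rw [← hC] at hpb hsb
  have hl := h.l0
  have hL := h.L0
  have hn := h.n0
  have hM0 := hμ.trans hM
  have hk2 : 0 < l / L * n + 1 - γ := by linarith [h.hk]
  have hC0 : 0 ≤ C := by rw [hC]; positivity
  have hK0 : 0 ≤ K := by rw [hK]; positivity
  have hr2 : ∀ r ∈ Ioo (0:ℝ) 1, r ^ 2 * r ^ (-γ) ≤ 1 := by
    intro r hr
    have : r ^ 2 * r ^ (-γ) = r ^ (2 - γ) := by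
      rw [← Real.rpow_natCast, ← Real.rpow_add hr.1]; congr 1
    rw [this]
    exact Real.rpow_le_one hr.1.le hr.2.le (by linarith)
  have hr1 : ∀ r ∈ Ioo (0:ℝ) 1, r * r ^ (1 - γ) ≤ 1 := by
    intro r hr
    have : r * r ^ (1 - γ) = r ^ (2 - γ) := by
      rw [mul_comm, ← Real.rpow_add_one hr.1.ne']; congr 1; ring
    rw [this]
    exact Real.rpow_le_one hr.1.le hr.2.le (by linarith)
  have hrp : ∀ r ∈ Ioo (0:ℝ) 1, |r * p r| ≤ C := by
    intro r hr
    have hp := hS.p_nonpos h hμ r hr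
    rw [abs_of_nonpos (by nlinarith [hr.1])]
    have e1 := mul_le_mul_of_nonneg_left (hpb r hr) hr.1.le
    have e2 := mul_le_mul_of_nonneg_left (hr1 r hr) hC0
    linarith
  have hlip : LipschitzOnWith (Real.toNNReal K) (fun r => r ^ 2 * p r) (Ioo 0 1) := by
    apply Convex.lipschitzOnWith_of_nnnorm_hasDerivWithin_le
      (f' := fun r => 2 * (r * p r) + r ^ 2 * s r) (convex_Ioo 0 1)
    · intro r hr
      have := ((hasDerivAt_pow 2 r).mul (hS.dp r hr)).hasDerivWithinAt (s := Ioo 0 1)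
      refine HasDerivWithinAt.congr_deriv this ?_
      simp
      ring
    · intro r hr
      rw [← NNReal.coe_le_coe, coe_nnnorm, Real.coe_toNNReal _ hK0, Real.norm_eq_abs]
      have a1 : |r ^ 2 * s r| ≤ (M + L * n * C) / l := by
        rw [abs_mul, abs_of_nonneg (by positivity : 0 ≤ r ^ 2)]
        have e1 := mul_le_mul_of_nonneg_left (hsb r hr) (by positivity : 0 ≤ r ^ 2)
        have e2 := mul_le_mul_of_nonneg_left (hr2 r hr)
          (by positivity : 0 ≤ (M + L * n * C) / l)
        linarith
      have a2 : |2 * (r * p r)| ≤ 2 * C := by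
        rw [abs_mul, abs_two]
        linarith [hrp r hr]
      rw [hK]
      exact (abs_add_le _ _).trans (add_le_add a2 a1)
  obtain ⟨g, hg, hge⟩ := hlip.extend_real
  have hgl : ∀ x y, |g x - g y| ≤ K * |x - y| := by
    intro x y
    have := hg.dist_le_mul x y
    rw [Real.coe_toNNReal _ hK0, Real.dist_eq, Real.dist_eq] at this
    exact this
  refine ⟨g, hgl, fun r hr => hge hr, ?_⟩
  intro x hx
  have hhalf : (1/2:ℝ) ∈ Ioo (0:ℝ) 1 := by constructor <;> norm_num
  have e1 := hgl x (1/2)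
  have e2 : |g (1/2)| ≤ C := by
    rw [← hge hhalf]
    have := hrp _ hhalf
    simp only
    rw [pow_two, mul_assoc, abs_mul]
    have : |(1/2:ℝ)| ≤ 1 := by rw [abs_of_nonneg] <;> norm_num
    nlinarith [abs_nonneg (1/2 * p (1/2))]
  have e3 : |x - 1/2| ≤ 1 := by
    rw [abs_le]; constructor <;> linarith [hx.1, hx.2]
  have e4 : |g x| ≤ |g x - g (1/2)| + |g (1/2)| := by
    have := abs_add_le (g x - g (1/2)) (g (1/2))
    simpa using this
  nlinarith

end bounds

/-- Arzelà–Ascoli on `[0,1]`, sequential form. -/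
lemma ascoli_seq (f : ℕ → ℝ → ℝ) (φ : ℝ → ℝ) (B : ℝ) (hφ : ContinuousOn φ (Icc 0 1))
    (hf : ∀ m, ∀ x ∈ Icc (0:ℝ) 1, ∀ y ∈ Icc (0:ℝ) 1, x ≤ y → |f m x - f m y| ≤ φ y - φ x)
    (hB : ∀ m, ∀ x ∈ Icc (0:ℝ) 1, |f m x| ≤ B) :
    ∃ (σ : ℕ → ℕ) (g : ℝ → ℝ), StrictMono σ ∧ ContinuousOn g (Icc 0 1) ∧
      TendstoUniformlyOn (fun m => f (σ m)) g atTop (Icc 0 1) := by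
  have hf' : ∀ m, ∀ x y : Icc (0:ℝ) 1, dist (f m x) (f m y) ≤ dist (φ x) (φ y) := by
    intro m x y
    rw [Real.dist_eq, Real.dist_eq]
    rcases le_total (x:ℝ) y with hxy | hxy
    · rw [abs_sub_comm (φ x)]
      exact (hf m x x.2 y y.2 hxy).trans (le_abs_self _)
    · rw [abs_sub_comm (f m x)]
      exact (hf m y y.2 x x.2 hxy).trans (le_abs_self _)
  have hφc : Continuous (fun x : Icc (0:ℝ) 1 => φ x) := hφ.domRestrict
  have hcm : ∀ m, Continuous (fun x : Icc (0:ℝ) 1 => f m x) := by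
    intro m
    rw [Metric.continuous_iff] at hφc ⊢
    intro b e he
    obtain ⟨d, hd, h2⟩ := hφc b e he
    exact ⟨d, hd, fun a ha => lt_of_le_of_lt (hf' m a b) (h2 a ha)⟩
  let Φ : ℕ → BoundedContinuousFunction (Icc (0:ℝ) 1) ℝ := fun m =>
    BoundedContinuousFunction.mkOfCompact ⟨fun x => f m x, hcm m⟩
  have hΦ : ∀ m x, Φ m x = f m x := fun m x => rfl
  have hcpt : IsCompact (closure (range Φ)) := by
    apply BoundedContinuousFunction.arzela_ascoli (Icc (-B) B) isCompact_Icc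
    · rintro _ x ⟨m, rfl⟩
      rw [hΦ]
      exact abs_le.1 (hB m x x.2)
    · intro x
      rw [Metric.equicontinuousAt_iff]
      intro e he
      obtain ⟨d, hd, h2⟩ := (Metric.continuous_iff.1 hφc) x e he
      refine ⟨d, hd, ?_⟩
      rintro y hy ⟨_, m, rfl⟩
      show dist (Φ m x) (Φ m y) < e
      rw [hΦ, hΦ, dist_comm]
      exact lt_of_le_of_lt (hf' m y x) (h2 y hy)
  obtain ⟨g, -, σ, hσ, hlim⟩ := hcpt.tendsto_subseq (x := Φ)
    (fun m => subset_closure (mem_range_self m))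
  rw [BoundedContinuousFunction.tendsto_iff_tendstoUniformly] at hlim
  have hval : (fun x => if hx : x ∈ Icc (0:ℝ) 1 then g ⟨x, hx⟩ else 0) ∘
      (Subtype.val : Icc (0:ℝ) 1 → ℝ) = g := by
    funext x
    exact dif_pos x.2
  refine ⟨σ, fun x => if hx : x ∈ Icc (0:ℝ) 1 then g ⟨x, hx⟩ else 0, hσ, ?_, ?_⟩
  · rw [continuousOn_iff_continuous_domRestrict]
    have := g.continuous
    rw [← hval] at this
    exact this
  · rw [tendstoUniformlyOn_iff_tendstoUniformly_comp_coe, hval]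
    exact hlim

lemma cc_of_unif {f : ℕ → ℝ → ℝ} {g : ℝ → ℝ} (hf : TendstoUniformlyOn f g atTop (Icc 0 1))
    (hg : ContinuousOn g (Icc 0 1)) {x : ℝ} (hx : x ∈ Ioo (0:ℝ) 1) :
    Tendsto (fun y : ℕ × ℝ => f y.1 y.2) (atTop ×ˢ nhds x) (nhds (g x)) := by
  have hnb : Icc (0:ℝ) 1 ∈ nhds x := Icc_mem_nhds hx.1 hx.2
  rw [Metric.tendsto_nhds]
  intro e he
  rw [Metric.tendstoUniformlyOn_iff] at hf
  have h1 := hf (e/2) (by linarith)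
  have h2 := (Metric.tendsto_nhds.1 (hg.continuousAt hnb).tendsto) (e/2) (by linarith)
  filter_upwards [(h1.prod_mk (h2.and hnb))] with y hy
  have a := hy.1 y.2 hy.2.2
  have b := hy.2.1
  have := dist_triangle (f y.1 y.2) (g y.2) (g x)
  rw [dist_comm] at a
  linarith

lemma lu_of_cc {f : ℕ → ℝ → ℝ} {g : ℝ → ℝ} (hg : ContinuousOn g (Ioo 0 1))
    (hf : ∀ x ∈ Ioo (0:ℝ) 1,
      Tendsto (fun y : ℕ × ℝ => f y.1 y.2) (atTop ×ˢ nhds x) (nhds (g x))) :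
    TendstoLocallyUniformlyOn f g atTop (Ioo 0 1) := by
  rw [tendstoLocallyUniformlyOn_iff_forall_tendsto]
  intro x hx
  rw [isOpen_Ioo.nhdsWithin_eq hx]
  have h1 : Tendsto (fun y : ℕ × ℝ => g y.2) (atTop ×ˢ nhds x) (nhds (g x)) :=
    ((hg.continuousAt (isOpen_Ioo.mem_nhds hx)).tendsto).comp tendsto_snd
  exact (h1.prodMk_nhds (hf x hx)).mono_right (nhds_le_uniformity _)

lemma cc_point {f : ℕ → ℝ → ℝ} {c x : ℝ}
    (hf : Tendsto (fun y : ℕ × ℝ => f y.1 y.2) (atTop ×ˢ nhds x) (nhds c)) :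
    Tendsto (fun m => f m x) atTop (nhds c) :=
  hf.comp (tendsto_id.prodMk (tendsto_const_nhds (x := x)))

/-- Compactness: limits of eigenfunctions. -/
lemma limit_sol {G : ℝ → ℝ → ℝ} {l L n : ℝ} (h : GP G l L n) {γ m M : ℝ} {μ e : ℕ → ℝ}
    {U p s : ℕ → ℝ → ℝ} (hγ : 0 < γ) (hγ2 : γ < 2) (hμ : ∀ i, 0 ≤ μ i) (hM : ∀ i, μ i ≤ M)
    (he : ∀ i, 0 ≤ e i) (hμl : Tendsto μ atTop (nhds m)) (hel : Tendsto e atTop (nhds 0))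
    (hS : ∀ i, Sol G γ (μ i) (e i) (U i) (p i) (s i)) :
    ∃ (σ : ℕ → ℕ) (u q t : ℝ → ℝ), StrictMono σ ∧ Sol G γ m 0 u q t ∧
      ContinuousOn t (Ioo 0 1) ∧
      TendstoUniformlyOn (fun i => U (σ i)) u atTop (Icc 0 1) := by
  have hm0 : 0 ≤ m := ge_of_tendsto' hμl hμ
  choose g hg1 hg2 hg3 using fun i => (hS i).p_mod h hγ hγ2 (he i) (hμ i) (hM i) rfl rfl
  obtain ⟨σ1, u, hσ1, huc, hu⟩ := ascoli_seq U
    (fun x => M / l / (l / L * n + 1 - γ) / (2 - γ) * x ^ (2 - γ)) 1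
    (continuous_const.mul (Real.continuous_rpow_const (by linarith))).continuousOn
    (fun i => (hS i).U_mod h hγ hγ2 (he i) (hμ i) (hM i))
    (fun i x hx => by
      rw [abs_of_nonneg ((hS i).nonneg h (hμ i) x hx)]
      exact (hS i).le_one h (hμ i) x hx)
  obtain ⟨σ2, w, hσ2, hwc, hw⟩ := ascoli_seq (fun i => g (σ1 i)) (fun x => _ * x) _
    (continuous_const.mul continuous_id).continuousOn
    (fun i x hx y hy hxy => by
      have := hg1 (σ1 i) x y
      rw [abs_sub_comm x, abs_of_nonneg (sub_nonneg.2 hxy), mul_sub] at this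
      exact this)
    (fun i => hg3 (σ1 i))
  set σ : ℕ → ℕ := fun i => σ1 (σ2 i) with hσdef
  have hσ : StrictMono σ := hσ1.comp hσ2
  have hu : TendstoUniformlyOn (fun i => U (σ i)) u atTop (Icc 0 1) := by
    intro v hv
    exact hσ2.tendsto_atTop.eventually (hu v hv)
  have hpt : ∀ x ∈ Icc (0:ℝ) 1, Tendsto (fun i => U (σ i) x) atTop (nhds (u x)) :=
    fun x hx => hu.tendsto_at hx
  have hu0 : u 0 = 1 := tendsto_nhds_unique (hpt 0 ⟨le_rfl, zero_le_one⟩) (by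
    simp [(hS _).U0])
  have hu1 : u 1 = 0 := tendsto_nhds_unique (hpt 1 ⟨zero_le_one, le_rfl⟩) (by
    simp [(hS _).U1])
  have hunn : ∀ x ∈ Icc (0:ℝ) 1, 0 ≤ u x := fun x hx =>
    ge_of_tendsto' (hpt x hx) (fun i => (hS _).nonneg h (hμ _) x hx)
  obtain ⟨I, hIc, hI1, hI2⟩ := h.exists_inv
  set q : ℝ → ℝ := fun r => w r / r ^ 2 with hq
  set t : ℝ → ℝ := fun r => I (q r / r, -(m * Qpot γ 0 r * u r)) with ht
  have hsub : Ioo (0:ℝ) 1 ⊆ Icc 0 1 := Ioo_subset_Icc_self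
  have hqc : ContinuousOn q (Ioo 0 1) :=
    (hwc.mono hsub).div (by fun_prop) (fun x hx => by have := hx.1; positivity)
  have hQc : ContinuousOn (Qpot γ 0) (Ioo 0 1) := by
    unfold Qpot
    refine ContinuousOn.rpow_const (by fun_prop) (fun x hx => Or.inl ?_)
    have := hx.1
    positivity
  have htc : ContinuousOn t (Ioo 0 1) := by
    refine hIc.comp_continuousOn (ContinuousOn.prodMk ?_ ?_)
    · exact hqc.div continuousOn_id (fun x hx => hx.1.ne')
    · exact ((continuousOn_const.mul hQc).mul (huc.mono hsub)).neg
  have hev : ∀ x ∈ Ioo (0:ℝ) 1, ∀ᶠ y : ℕ × ℝ in atTop ×ˢ nhds x, y.2 ∈ Ioo (0:ℝ) 1 :=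
    fun x hx => tendsto_snd.eventually (isOpen_Ioo.mem_nhds hx)
  have ccU : ∀ x ∈ Ioo (0:ℝ) 1,
      Tendsto (fun y : ℕ × ℝ => U (σ y.1) y.2) (atTop ×ˢ nhds x) (nhds (u x)) :=
    fun x hx => cc_of_unif hu huc hx
  have ccp : ∀ x ∈ Ioo (0:ℝ) 1,
      Tendsto (fun y : ℕ × ℝ => p (σ y.1) y.2) (atTop ×ˢ nhds x) (nhds (q x)) := by
    intro x hx
    have h1 := cc_of_unif hw hwc hx
    have h2 : Tendsto (fun y : ℕ × ℝ => y.2 ^ 2) (atTop ×ˢ nhds x) (nhds (x ^ 2)) :=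
      (tendsto_snd (f := atTop) (g := nhds x)).pow 2
    have hx2 : x ^ 2 ≠ 0 := by have := hx.1; positivity
    refine (h1.div h2 hx2).congr' ?_
    filter_upwards [hev x hx] with y hy
    have := hg2 (σ y.1) y.2 hy
    have hy0 : y.2 ≠ 0 := hy.1.ne'
    show g (σ y.1) y.2 / y.2 ^ 2 = _
    rw [← this]
    field_simp
  have ccs : ∀ x ∈ Ioo (0:ℝ) 1,
      Tendsto (fun y : ℕ × ℝ => s (σ y.1) y.2) (atTop ×ˢ nhds x) (nhds (t x)) := by
    intro x hx
    have hsnd : Tendsto (fun y : ℕ × ℝ => y.2) (atTop ×ˢ nhds x) (nhds x) := tendsto_snd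
    have h1 := (ccp x hx).div hsnd hx.1.ne'
    have hσt : Tendsto (fun y : ℕ × ℝ => σ y.1) (atTop ×ˢ nhds x) atTop :=
      hσ.tendsto_atTop.comp tendsto_fst
    have hmu := hμl.comp hσt
    have hee := hel.comp hσt
    have hQ : Tendsto (fun y : ℕ × ℝ => Qpot γ (e (σ y.1)) y.2) (atTop ×ˢ nhds x)
        (nhds (Qpot γ 0 x)) := by
      unfold Qpot
      refine Tendsto.rpow_const ((hsnd.pow 2).add (hee.pow 2)) (Or.inl ?_)
      have := hx.1
      positivity
    have h2 := ((hmu.mul hQ).mul (ccU x hx)).neg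
    refine ((hIc.tendsto _).comp (h1.prodMk_nhds h2)).congr' ?_
    filter_upwards [hev x hx] with y hy
    exact (hI2 _ _ _ ((hS (σ y.1)).eq y.2 hy)).symm
  have hdu : ∀ r ∈ Ioo (0:ℝ) 1, HasDerivAt u (q r) r := fun r hr =>
    hasDerivAt_of_tendstoLocallyUniformlyOn isOpen_Ioo
      (lu_of_cc (f := fun i => p (σ i)) hqc ccp)
      (Eventually.of_forall fun i x hx => (hS (σ i)).dU x hx)
      (fun x hx => hpt x (hsub hx)) hr
  have hdq : ∀ r ∈ Ioo (0:ℝ) 1, HasDerivAt q (t r) r := fun r hr =>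
    hasDerivAt_of_tendstoLocallyUniformlyOn isOpen_Ioo
      (lu_of_cc (f := fun i => s (σ i)) htc ccs)
      (Eventually.of_forall fun i x hx => (hS (σ i)).dp x hx)
      (fun x hx => cc_point (f := fun i => p (σ i)) (ccp x hx)) hr
  have hequ : ∀ r ∈ Ioo (0:ℝ) 1, G (t r) (q r / r) = -(m * Qpot γ 0 r * u r) :=
    fun r hr => hI1 _ _
  have hG0 : ∀ r ∈ Ioo (0:ℝ) 1, G (t r) (q r / r) ≤ 0 := by
    intro r hr
    rw [hequ r hr]
    have := mul_nonneg (mul_nonneg hm0 (Qpot_pos (γ := γ) (ε := 0) hr.1).le) (hunn r (hsub hr))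
    linarith
  have hq0 := super_noninc h hdu hdq (fun r hr => hunn r (hsub hr)) hG0
  have hua : AntitoneOn u (Icc 0 1) := anti_of (convex_Icc 0 1) interior_Icc huc hdu hq0
  refine ⟨σ, u, q, t, hσ, ⟨huc, ?_, hu0, hu1, hdu, hdq, hequ⟩, htc, hu⟩
  -- strict positivity
  intro r0 hr0
  by_contra hcon
  push Not at hcon
  have hr0' : r0 ∈ Icc (0:ℝ) 1 := ⟨hr0.1, hr0.2.le⟩
  have hz : u r0 = 0 := le_antisymm hcon (hunn r0 hr0')
  have hr0p : 0 < r0 := by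
    rcases hr0.1.eq_or_lt with h0 | h0
    · rw [← h0, hu0] at hz
      norm_num at hz
    · exact h0
  have hr0m : r0 ∈ Ioo (0:ℝ) 1 := ⟨hr0p, hr0.2⟩
  have hqz : q r0 = 0 := by
    refine IsLocalMin.hasDerivAt_eq_zero ?_ (hdu r0 hr0m)
    filter_upwards [Icc_mem_nhds hr0p hr0.2] with x hx
    rw [hz]
    exact hunn x hx
  set K := L * n / l with hK
  have hmono : MonotoneOn (fun x => x ^ K * (-q x)) (Ioo 0 1) := by
    refine mono_of (p := fun r => r ^ K * (-t r + K * (-q r / r))) (convex_Ioo 0 1) interior_Ioo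
      ?_ ?_ ?_
    · intro r hr
      exact (hd_pow_mul (p := fun x => -q x) (p' := fun x => -t x) hr.1
        (hdq r hr).neg).continuousAt.continuousWithinAt
    · intro r hr
      exact hd_pow_mul (p := fun x => -q x) (p' := fun x => -t x) hr.1 (hdq r hr).neg
    · intro r hr
      apply mul_nonneg (Real.rpow_pos_of_pos hr.1 K).le
      apply h.E3 (div_nonneg (by linarith [hq0 r hr]) hr.1.le)
      rw [neg_neg, neg_div, neg_neg]
      exact hG0 r hr
  have hqzero : ∀ r ∈ Ioo 0 r0, 0 ≤ q r := by
    intro r hr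
    have := hmono ⟨hr.1, hr.2.trans hr0.2⟩ hr0m hr.2.le
    simp only [hqz, neg_zero, mul_zero] at this
    have hp := Real.rpow_pos_of_pos hr.1 K
    by_contra hc
    push Not at hc
    nlinarith
  have hum : MonotoneOn u (Icc 0 r0) := by
    apply monotoneOn_of_deriv_nonneg (convex_Icc 0 r0)
      (huc.mono (Icc_subset_Icc_right hr0.2.le))
    · rw [interior_Icc]
      intro r hr
      exact (hdu r ⟨hr.1, hr.2.trans hr0.2⟩).differentiableAt.differentiableWithinAt
    · rw [interior_Icc]
      intro r hr
      rw [(hdu r ⟨hr.1, hr.2.trans hr0.2⟩).deriv]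
      exact hqzero r hr
  have := hum ⟨le_rfl, hr0p.le⟩ ⟨hr0p.le, le_rfl⟩ hr0p.le
  rw [hu0, hz] at this
  norm_num at this

lemma derivs_of_contDiffOn {u : ℝ → ℝ} (hu : ContDiffOn ℝ 2 u (Ioo 0 1)) :
    (∀ r ∈ Ioo (0:ℝ) 1, HasDerivAt u (deriv u r) r) ∧
    (∀ r ∈ Ioo (0:ℝ) 1, HasDerivAt (deriv u) (deriv (deriv u) r) r) := by
  have h1 := (contDiffOn_succ_iff_deriv_of_isOpen (n := 1) isOpen_Ioo).1
    (by simpa [one_add_one_eq_two] using hu)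
  constructor
  · intro r hr
    exact (h1.1.differentiableAt (isOpen_Ioo.mem_nhds hr)).hasDerivAt
  · intro r hr
    exact ((h1.2.2.differentiableOn (by norm_num)).differentiableAt
      (isOpen_Ioo.mem_nhds hr)).hasDerivAt

lemma contDiffOn_of_derivs {u q t : ℝ → ℝ} (hu : ∀ r ∈ Ioo (0:ℝ) 1, HasDerivAt u (q r) r)
    (hq : ∀ r ∈ Ioo (0:ℝ) 1, HasDerivAt q (t r) r) (ht : ContinuousOn t (Ioo 0 1)) :
    ContDiffOn ℝ 2 u (Ioo 0 1) ∧ (∀ r ∈ Ioo (0:ℝ) 1, deriv u r = q r) ∧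
      (∀ r ∈ Ioo (0:ℝ) 1, deriv (deriv u) r = t r) := by
  have e1 : ∀ r ∈ Ioo (0:ℝ) 1, deriv u r = q r := fun r hr => (hu r hr).deriv
  have e2 : ∀ r ∈ Ioo (0:ℝ) 1, HasDerivAt (deriv u) (t r) r := by
    intro r hr
    refine (hq r hr).congr_of_eventuallyEq ?_
    filter_upwards [isOpen_Ioo.mem_nhds hr] with x hx using e1 x hx
  have e3 : ∀ r ∈ Ioo (0:ℝ) 1, deriv (deriv u) r = t r := fun r hr => (e2 r hr).deriv
  refine ⟨?_, e1, e3⟩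
  rw [show (2 : WithTop ℕ∞) = 1 + 1 by norm_num, contDiffOn_succ_iff_deriv_of_isOpen isOpen_Ioo]
  refine ⟨fun r hr => (hu r hr).differentiableAt.differentiableWithinAt, by simp, ?_⟩
  rw [show (1 : WithTop ℕ∞) = 0 + 1 by norm_num, contDiffOn_succ_iff_deriv_of_isOpen isOpen_Ioo]
  refine ⟨fun r hr => (e2 r hr).differentiableAt.differentiableWithinAt, by simp, ?_⟩
  rw [contDiffOn_zero]
  exact ht.congr e3

theorem stmt18 (N : ℕ) (hN : 2 ≤ N) (lam Lam : ℝ) (hlam : 0 < lam) (hlL : lam ≤ Lam)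
    (hNp : 2 < lam / Lam * ((N : ℝ) - 1) + 1)
    (F : Matrix (Fin N) (Fin N) ℝ → ℝ)
    (hF1 : UnifElliptic N lam Lam F) (hF2 : RotInvariant N F) (hF3 : PosHomog N F)
    (γ : ℝ) (hγ0 : 0 < γ) (hγ2 : γ < 2)
    (U : ℝ → ℝ → ℝ)
    (hU : ∀ ε ∈ Ioc (0:ℝ) 1,
      ContinuousOn (U ε) (Icc 0 1) ∧ ContDiffOn ℝ 2 (U ε) (Ico 0 1) ∧
      derivWithin (U ε) (Ici 0) 0 = 0 ∧
      (∀ r ∈ Ico (0:ℝ) 1, 0 < U ε r) ∧ U ε 0 = 1 ∧ U ε 1 = 0 ∧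
      (∀ r ∈ Ioo (0:ℝ) 1,
        F (Dmat N (deriv (deriv (U ε)) r) (deriv (U ε) r / r))
          + epsEV N F γ ε * U ε r * (r ^ 2 + ε ^ 2) ^ (-(γ / 2)) = 0)) :
    Tendsto (fun ε => epsEV N F γ ε) (nhdsWithin 0 (Ioi 0)) (nhds (radialEV N F γ)) ∧
    ∃ e : ℕ → ℝ, (∀ n, e n ∈ Ioc (0:ℝ) 1) ∧ Tendsto e atTop (nhds 0) ∧
      ∃ u : ℝ → ℝ, ContinuousOn u (Icc 0 1) ∧ ContDiffOn ℝ 2 u (Ioo 0 1) ∧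
        u 0 = 1 ∧ (∀ r ∈ Ico (0:ℝ) 1, 0 < u r) ∧ u 1 = 0 ∧
        (∀ r ∈ Ioo (0:ℝ) 1,
          F (Dmat N (deriv (deriv u) r) (deriv u r / r))
            + radialEV N F γ * u r * r ^ (-γ) = 0) ∧
        TendstoUniformlyOn (fun n => U (e n)) u atTop (Icc 0 1) := by
  set G : ℝ → ℝ → ℝ := fun a b => F (Dmat N a b) with hGdef
  have h : GP G lam Lam ((N : ℝ) - 1) := gp_of_F N hN lam Lam hlam hlL hNp F hF1 hF3
  have hμ0 : ∀ ε, 0 ≤ epsEV N F γ ε := by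
    intro ε
    by_cases hb : BddAbove {μ : ℝ | ∃ u : ℝ → ℝ, ContinuousOn u (Ico 0 1) ∧
        ContDiffOn ℝ 2 u (Ioo 0 1) ∧ (∀ r ∈ Ico (0:ℝ) 1, 0 < u r) ∧
        (∀ r ∈ Ioo (0:ℝ) 1, F (Dmat N (deriv (deriv u) r) (deriv u r / r))
          + μ * u r * (r ^ 2 + ε ^ 2) ^ (-(γ / 2)) ≤ 0)}
    · refine le_csSup hb ⟨fun _ => 1, continuousOn_const, contDiffOn_const,
        fun _ _ => one_pos, ?_⟩
      intro r hr
      have := h.zero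
      simp only [hGdef] at this
      simp [this]
    · exact (Real.sSup_of_not_bddAbove hb).ge
  have hSol : ∀ ε ∈ Ioc (0:ℝ) 1,
      Sol G γ (epsEV N F γ ε) ε (U ε) (deriv (U ε)) (deriv (deriv (U ε))) := by
    intro ε hε
    obtain ⟨a1, a2, -, a4, a5, a6, a7⟩ := hU ε hε
    obtain ⟨d1, d2⟩ := derivs_of_contDiffOn (a2.mono Ioo_subset_Ico_self)
    refine ⟨a1, a4, a5, a6, d1, d2, ?_⟩
    intro r hr
    have := a7 r hr
    unfold Qpot
    simp only [hGdef]
    linarith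
  have hmono : ∀ ε1 ∈ Ioc (0:ℝ) 1, ∀ ε2 ∈ Ioc (0:ℝ) 1, ε1 ≤ ε2 →
      epsEV N F γ ε1 ≤ epsEV N F γ ε2 := by
    intro ε1 h1 ε2 h2 h12
    have S1 := hSol ε1 h1
    exact lemmaC h hγ0 h1.1.le h12 (hμ0 _) (hSol ε2 h2)
      (fun r hr => S1.pos r ⟨hr.1.le, hr.2⟩) S1.dU S1.dp (fun r hr => (S1.eq r hr).le)
  have hAle : ∀ ε ∈ Ioc (0:ℝ) 1, ∀ μ ∈ {μ : ℝ | ∃ u : ℝ → ℝ, ContDiffOn ℝ 2 u (Ioo 0 1) ∧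
      (∀ r ∈ Ioo (0:ℝ) 1, 0 < u r) ∧
      (∀ r ∈ Ioo (0:ℝ) 1,
        F (Dmat N (deriv (deriv u) r) (deriv u r / r)) + μ * u r * r ^ (-γ) ≤ 0)},
      μ ≤ epsEV N F γ ε := by
    rintro ε hε μ ⟨u, hu1, hu2, hu3⟩
    obtain ⟨d1, d2⟩ := derivs_of_contDiffOn hu1
    refine lemmaC h hγ0 le_rfl hε.1.le (hμ0 _) (hSol ε hε) hu2 d1 d2 ?_
    intro r hr
    have := hu3 r hr
    rw [Qpot_zero hr.1]
    simp only [hGdef]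
    linarith
  have hone : (1:ℝ) ∈ Ioc (0:ℝ) 1 := ⟨one_pos, le_rfl⟩
  have hrad_le : ∀ ε ∈ Ioc (0:ℝ) 1, radialEV N F γ ≤ epsEV N F γ ε := by
    intro ε hε
    refine csSup_le ⟨0, fun _ => 1, contDiffOn_const, fun _ _ => one_pos, ?_⟩ (hAle ε hε)
    intro r hr
    have := h.zero
    simp only [hGdef] at this
    simp [this]
  set e : ℕ → ℝ := fun i => 1 / ((i : ℝ) + 1) with he
  have heI : ∀ i, e i ∈ Ioc (0:ℝ) 1 := by
    intro i
    refine ⟨by positivity, ?_⟩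
    rw [he]
    simp only
    rw [div_le_one (by positivity)]
    have : (0:ℝ) ≤ i := Nat.cast_nonneg i
    linarith
  have hel : Tendsto e atTop (nhds 0) := tendsto_one_div_add_atTop_nhds_zero_nat
  have heanti : Antitone e := by
    intro i j hij
    exact one_div_le_one_div_of_le (by positivity) (by
      have : (i:ℝ) ≤ j := by exact_mod_cast hij
      linarith)
  have hμanti : Antitone (fun i => epsEV N F γ (e i)) :=
    fun i j hij => hmono _ (heI j) _ (heI i) (heanti hij)
  obtain ⟨m, hm⟩ : ∃ m, Tendsto (fun i => epsEV N F γ (e i)) atTop (nhds m) :=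
    ⟨_, tendsto_atTop_ciInf hμanti ⟨0, by rintro _ ⟨i, rfl⟩; exact hμ0 _⟩⟩
  obtain ⟨σ, u, q, t, hσ, hu, htc, hlim⟩ := limit_sol h hγ0 hγ2 (fun i => hμ0 (e i))
    (fun i => hmono _ (heI i) 1 hone (heI i).2) (fun i => (heI i).1.le) hm hel
    (fun i => hSol _ (heI i))
  obtain ⟨c1, c2, c3⟩ := contDiffOn_of_derivs hu.dU hu.dp htc
  have hequ : ∀ r ∈ Ioo (0:ℝ) 1,
      F (Dmat N (deriv (deriv u) r) (deriv u r / r)) + m * u r * r ^ (-γ) = 0 := by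
    intro r hr
    have := hu.eq r hr
    rw [Qpot_zero hr.1] at this
    simp only [hGdef] at this
    rw [c2 r hr, c3 r hr, this]
    ring
  have hmr : m = radialEV N F γ := by
    apply le_antisymm
    · exact le_csSup ⟨_, hAle 1 hone⟩ ⟨u, c1, fun r hr => hu.pos r ⟨hr.1.le, hr.2⟩,
        fun r hr => (hequ r hr).le⟩
    · exact ge_of_tendsto' hm (fun i => hrad_le _ (heI i))
  rw [hmr] at hm hequ
  refine ⟨?_, fun i => e (σ i), fun i => heI _, hel.comp hσ.tendsto_atTop, u, hu.cont, c1, hu.U0,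
    hu.pos, hu.U1, hequ, hlim⟩
  rw [Metric.tendsto_nhds]
  intro η hη
  obtain ⟨i, hi⟩ := ((Metric.tendsto_nhds.1 hm) η hη).exists
  filter_upwards [Ioo_mem_nhdsGT (heI i).1] with ε hε
  have hε1 : ε ∈ Ioc (0:ℝ) 1 := ⟨hε.1, hε.2.le.trans (heI i).2⟩
  have a1 := hrad_le ε hε1
  have a2 := hmono ε hε1 _ (heI i) hε.2.le
  rw [Real.dist_eq] at hi ⊢
  rw [abs_of_nonneg (by linarith)] at hi ⊢
  linarith

end
end
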